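/- Suppose the seminorm N satisfies N(ν) ≤ Σ_{f∈F} d(f)|ν(f)| for every finite signed measure ν, where F is a countable family of measurable functions satisfying Assumption 1 and the d(f) are positive constants with Σ_{f∈F} d(f)‖f‖ < ∞. Suppose there is a positive sequence (b_n) such that P[N(P_n − Q_n) ≤ b_n] → 0 as n → ∞, and b_n^{−1}·[n^{−ρ̄/2}(1 + ln(n)·1{γ−1+ρ̄/2 = 0}) + n^{γ−1}] → 0 as n → ∞. Then θ̂_n − θ = O_p(n^{−1} b_n^{−2/ρ̄}). -/

import Mathlib

open MeasureTheory Filter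

/-- The integral `ν(f) = ∫ f dν` of a function against a finite signed measure,
via the Jordan decomposition. -/
noncomputable def sIntegral {E : Type*} [MeasurableSpace E] (ν : SignedMeasure E) (f : E → ℝ) : ℝ :=
  ∫ x, f x ∂ν.toJordanDecomposition.posPart - ∫ x, f x ∂ν.toJordanDecomposition.negPart

/-- Covariance of two real random variables. -/
noncomputable def covar {Ω : Type*} [MeasurableSpace Ω] (μ : Measure Ω) (Y Z : Ω → ℝ) : ℝ :=
  ∫ ω, (Y ω - ∫ ω', Y ω' ∂μ) * (Z ω - ∫ ω', Z ω' ∂μ) ∂μ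

/-- Variance of a real random variable. -/
noncomputable def variance' {Ω : Type*} [MeasurableSpace Ω] (μ : Measure Ω) (Y : Ω → ℝ) : ℝ :=
  covar μ Y Y

/-- `A_n = O_p(c_n)`: `lim_{M→∞} limsup_{n→∞} P(|A_n| > M c_n) = 0`. -/
def IsOp {Ω : Type*} [MeasurableSpace Ω] (μ : Measure Ω) (A : ℕ → Ω → ℝ) (c : ℕ → ℝ) : Prop :=
  Tendsto (fun M : ℝ => Filter.limsup (fun n => μ {ω | M * c n < |A n ω|}) atTop)
    atTop (nhds 0)

section SignedIntegral

variable {E : Type*} [MeasurableSpace E]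

/-- A real-valued function with bounded range. -/
def IsBddFun (f : E → ℝ) : Prop := ∃ M, ∀ x, |f x| ≤ M

theorem IsBddFun.integrable {f : E → ℝ} (hf : IsBddFun f) (hm : Measurable f)
    (μ : Measure E) [IsFiniteMeasure μ] : Integrable f μ := by
  obtain ⟨M, hM⟩ := hf
  exact Integrable.of_bound hm.aestronglyMeasurable M (ae_of_all _ hM)

theorem sIntegral_toSignedMeasure_sub {f : E → ℝ} (hf : IsBddFun f) (hm : Measurable f)
    (A B : Measure E) [IsFiniteMeasure A] [IsFiniteMeasure B] :
    sIntegral (A.toSignedMeasure - B.toSignedMeasure) f = ∫ x, f x ∂A - ∫ x, f x ∂B := by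
  set ν := A.toSignedMeasure - B.toSignedMeasure with hν
  have h1 := SignedMeasure.toSignedMeasure_toJordanDecomposition ν
  rw [JordanDecomposition.toSignedMeasure] at h1
  have h2 : (ν.toJordanDecomposition.posPart + B).toSignedMeasure
      = (A + ν.toJordanDecomposition.negPart).toSignedMeasure := by
    rw [Measure.toSignedMeasure_add, Measure.toSignedMeasure_add]
    rw [hν, sub_eq_sub_iff_add_eq_add] at h1
    exact h1
  rw [Measure.toSignedMeasure_eq_toSignedMeasure_iff] at h2
  have h3 : ∫ x, f x ∂(ν.toJordanDecomposition.posPart + B)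
      = ∫ x, f x ∂(A + ν.toJordanDecomposition.negPart) := by rw [h2]
  rw [integral_add_measure (hf.integrable hm _) (hf.integrable hm _),
    integral_add_measure (hf.integrable hm _) (hf.integrable hm _)] at h3
  unfold sIntegral
  linarith

theorem sIntegral_add {f : E → ℝ} (hf : IsBddFun f) (hm : Measurable f)
    (μ ν : SignedMeasure E) : sIntegral (μ + ν) f = sIntegral μ f + sIntegral ν f := by
  have h1 := SignedMeasure.toSignedMeasure_toJordanDecomposition ν
  have h2 := SignedMeasure.toSignedMeasure_toJordanDecomposition μ
  rw [JordanDecomposition.toSignedMeasure] at h1 h2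
  have h3 : μ + ν = (μ.toJordanDecomposition.posPart
      + ν.toJordanDecomposition.posPart).toSignedMeasure -
      (μ.toJordanDecomposition.negPart + ν.toJordanDecomposition.negPart).toSignedMeasure := by
    rw [Measure.toSignedMeasure_add, Measure.toSignedMeasure_add, add_sub_add_comm, h1, h2]
  conv_lhs => rw [h3]
  rw [sIntegral_toSignedMeasure_sub hf hm,
    integral_add_measure (hf.integrable hm _) (hf.integrable hm _),
    integral_add_measure (hf.integrable hm _) (hf.integrable hm _)]
  unfold sIntegral
  ring

theorem sIntegral_neg (μ : SignedMeasure E) (f : E → ℝ) :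
    sIntegral (-μ) f = -sIntegral μ f := by
  simp [sIntegral, SignedMeasure.toJordanDecomposition_neg]

theorem sIntegral_smul (c : ℝ) (μ : SignedMeasure E) (f : E → ℝ) :
    sIntegral (c • μ) f = c * sIntegral μ f := by
  unfold sIntegral
  rw [SignedMeasure.toJordanDecomposition_smul_real]
  rcases le_or_gt 0 c with h | h
  · rw [JordanDecomposition.real_smul_posPart_nonneg _ _ h,
      JordanDecomposition.real_smul_negPart_nonneg _ _ h, integral_smul_nnreal_measure,
      integral_smul_nnreal_measure]
    simp only [NNReal.smul_def, Real.coe_toNNReal _ h, smul_eq_mul]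
    ring
  · rw [JordanDecomposition.real_smul_posPart_neg _ _ h,
      JordanDecomposition.real_smul_negPart_neg _ _ h, integral_smul_nnreal_measure,
      integral_smul_nnreal_measure]
    simp only [NNReal.smul_def, Real.coe_toNNReal _ (neg_nonneg.2 h.le), smul_eq_mul]
    ring

theorem sIntegral_sum {ι : Type*} {f : E → ℝ} (hf : IsBddFun f) (hm : Measurable f)
    (s : Finset ι) (μ : ι → SignedMeasure E) :
    sIntegral (∑ i ∈ s, μ i) f = ∑ i ∈ s, sIntegral (μ i) f := by
  classical
  induction s using Finset.induction_on with
  | empty => simpa using sIntegral_smul 0 (0 : SignedMeasure E) f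
  | insert a s ha ih => rw [Finset.sum_insert ha, Finset.sum_insert ha, sIntegral_add hf hm, ih]

/-- A function whose tail masses blow up is not integrable. -/
theorem integral_eq_zero_of_tail {f : E → ℝ} (μ : Measure E)
    [IsFiniteMeasure μ] (h : ∀ M : ℝ, ∃ l : ℕ, M < l * μ.real {x | (l : ℝ) ≤ |f x|}) :
    ∫ x, f x ∂μ = 0 := by
  refine integral_undef fun hf => ?_
  obtain ⟨l, hl⟩ := h (∫ x, |f x| ∂μ)
  exact absurd (mul_meas_ge_le_integral_of_nonneg (ae_of_all _ fun x => abs_nonneg (f x)) hf.abs l)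
    (not_le.2 hl)

theorem sIntegral_eq_zero_of_tail {f : E → ℝ} (hm : Measurable f) (ν : SignedMeasure E)
    (h1 : ∀ M : ℝ, ∃ l : ℕ, M < l * ν {x | (l : ℝ) ≤ |f x|})
    (h2 : ∀ M : ℝ, ∃ l : ℕ, M < l * -ν {x | (l : ℝ) ≤ |f x|}) :
    sIntegral ν f = 0 := by
  have hA : ∀ l : ℕ, MeasurableSet {x | (l : ℝ) ≤ |f x|} := fun l =>
    measurableSet_le measurable_const hm.abs
  unfold sIntegral
  rw [integral_eq_zero_of_tail, integral_eq_zero_of_tail, sub_zero]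
  · intro M
    obtain ⟨l, hl⟩ := h2 M
    refine ⟨l, hl.trans_le (mul_le_mul_of_nonneg_left ?_ (Nat.cast_nonneg l))⟩
    rw [SignedMeasure.apply_eq_posPart_real_sub_negPart_real _ (hA l)]
    have : 0 ≤ ν.toJordanDecomposition.posPart.real {x | (l : ℝ) ≤ |f x|} := measureReal_nonneg
    linarith
  · intro M
    obtain ⟨l, hl⟩ := h1 M
    refine ⟨l, hl.trans_le (mul_le_mul_of_nonneg_left ?_ (Nat.cast_nonneg l))⟩
    rw [SignedMeasure.apply_eq_posPart_real_sub_negPart_real _ (hA l)]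
    have : 0 ≤ ν.toJordanDecomposition.negPart.real {x | (l : ℝ) ≤ |f x|} := measureReal_nonneg
    linarith

theorem tendsto_signedMeasure_tail {f : E → ℝ} (hm : Measurable f) (ν : SignedMeasure E) :
    Tendsto (fun l : ℕ => ν {x | (l : ℝ) ≤ |f x|}) atTop (nhds 0) := by
  have := VectorMeasure.tendsto_vectorMeasure_iInter_atTop_nat (v := ν)
    (s := fun l : ℕ => {x | (l : ℝ) ≤ |f x|})
    (fun i j hij x (hx : (j : ℝ) ≤ |f x|) => (Nat.cast_le.2 hij).trans hx)
    (fun l => measurableSet_le measurable_const hm.abs)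
  have h0 : ⋂ l : ℕ, {x | (l : ℝ) ≤ |f x|} = ∅ := by
    ext x
    simp only [Set.mem_iInter, Set.mem_ofPred_eq, Set.mem_empty_iff_false, iff_false, not_forall,
      not_le]
    exact exists_nat_gt _
  rwa [h0, VectorMeasure.empty] at this

/-- For an unbounded function, generic integrable densities make its tail masses blow up. -/
theorem dense_tail_blowup {f : E → ℝ} (hm : Measurable f) (m : Measure E) [IsFiniteMeasure m]
    (hpos : ∀ l : ℕ, m {x | (l : ℝ) ≤ |f x|} ≠ 0) (μ : SignedMeasure E) {c : ℝ} (hc : c ≠ 0)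
    (M : ℝ) :
    Dense {r : E →₁[m] ℝ | ∃ l : ℕ, M < l * (μ {x | (l : ℝ) ≤ |f x|}
      + c * ∫ x in {x | (l : ℝ) ≤ |f x|}, r x ∂m)} := by
  have hA : ∀ l : ℕ, MeasurableSet {x | (l : ℝ) ≤ |f x|} := fun l =>
    measurableSet_le measurable_const hm.abs
  rw [Metric.dense_iff]
  intro r ε hε
  have hpos' : ∀ l : ℕ, 0 < m.real {x | (l : ℝ) ≤ |f x|} := fun l =>
    ENNReal.toReal_pos (hpos l) (measure_ne_top _ _)
  have hfint := L1.integrable_coeFn r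
  have hlim : Tendsto (fun l : ℕ => μ {x | (l : ℝ) ≤ |f x|}
      + c * (m.withDensityᵥ r) {x | (l : ℝ) ≤ |f x|}) atTop (nhds 0) := by
    simpa using (tendsto_signedMeasure_tail hm μ).add
      ((tendsto_signedMeasure_tail hm (m.withDensityᵥ r)).const_mul c)
  have hδ : 0 < |c| * (ε / 2) := by positivity
  have h1 := hlim.eventually (lt_mem_nhds (show -(|c| * (ε / 2) / 2) < 0 by linarith))
  have h2 : ∀ᶠ l : ℕ in atTop, M / (|c| * (ε / 2) / 2) < l :=
    tendsto_natCast_atTop_atTop.eventually_gt_atTop _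
  have h3 := eventually_ge_atTop 1
  obtain ⟨l, hl1, hl2, hl3⟩ := (h1.and (h2.and h3)).exists
  set A := {x | (l : ℝ) ≤ |f x|} with hAdef
  set a : ℝ := (c / |c|) * (ε / 2) / m.real A with ha
  have habs : |(c / |c|)| = 1 := by rw [abs_div, abs_abs, div_self (abs_ne_zero.2 hc)]
  set g : E →₁[m] ℝ := indicatorConstLp 1 (hA l) (measure_ne_top m _) a with hg
  refine ⟨r + g, ?_, l, ?_⟩
  · rw [Metric.mem_ball, dist_eq_norm, add_sub_cancel_left, hg,
      norm_indicatorConstLp one_ne_zero ENNReal.one_ne_top]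
    simp only [ENNReal.toReal_one, div_one, Real.rpow_one, Real.norm_eq_abs]
    rw [ha, abs_div, abs_mul, habs, abs_of_pos (hpos' l), one_mul, abs_of_pos (by linarith),
      div_mul_cancel₀ _ (hpos' l).ne']
    linarith
  · have hi1 : ∫ x in A, (r + g : E →₁[m] ℝ) x ∂m = ∫ x in A, r x ∂m + ∫ x in A, g x ∂m := by
      rw [← integral_add hfint.integrableOn (L1.integrable_coeFn g).integrableOn]
      refine setIntegral_congr_ae (hA l) ?_
      filter_upwards [Lp.coeFn_add r g] with x hx _
      rw [hx]; rfl
    have hi2 : ∫ x in A, g x ∂m = (c / |c|) * (ε / 2) := by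
      have : ∫ x in A, g x ∂m = ∫ x in A, a ∂m := by
        refine setIntegral_congr_ae (hA l) ?_
        filter_upwards [indicatorConstLp_coeFn_mem (p := 1) (hs := hA l)
          (hμs := measure_ne_top m _) (c := a)] with x hx hxA
        exact hx hxA
      rw [this, setIntegral_const, smul_eq_mul, ha, mul_div_cancel₀ _ (hpos' l).ne']
    rw [withDensityᵥ_apply hfint (hA l)] at hl1
    rw [hi1, hi2]
    have hcc : c * (c / |c| * (ε / 2)) = |c| * (ε / 2) := by
      have : c * c = |c| * |c| := (abs_mul_abs_self c).symm
      field_simp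
      nlinarith
    rw [div_lt_iff₀ (by linarith)] at hl2
    have hl0 : (0 : ℝ) < l := by exact_mod_cast hl3
    calc M < l * (|c| * (ε / 2) / 2) := hl2
      _ ≤ _ := by
        refine mul_le_mul_of_nonneg_left ?_ hl0.le
        rw [mul_add, hcc]
        linarith

theorem isOpen_tail_blowup (f : E → ℝ) (m : Measure E) (μ : SignedMeasure E) (c M : ℝ) :
    IsOpen {r : E →₁[m] ℝ | ∃ l : ℕ, M < l * (μ {x | (l : ℝ) ≤ |f x|}
      + c * ∫ x in {x | (l : ℝ) ≤ |f x|}, r x ∂m)} := by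
  rw [Set.ofPred_exists]
  refine isOpen_iUnion fun l => isOpen_lt continuous_const ?_
  exact continuous_const.mul (continuous_const.add
    (continuous_const.mul (continuous_setIntegral _)))

/-- There is a direction `r` such that `r` and all `μ - r / (j + 1)` integrate the unbounded
functions of a countable family only in the degenerate sense. -/
theorem exists_degenerate_direction {F : Set (E → ℝ)} (hF : F.Countable)
    (hm : ∀ f ∈ F, Measurable f) (μ : SignedMeasure E) :
    ∃ r : SignedMeasure E, ∀ f ∈ F, ¬ IsBddFun f →
      sIntegral r f = 0 ∧ ∀ j : ℕ, sIntegral (μ - (1 / ((j : ℝ) + 1)) • r) f = 0 := by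
  set S : Set (E → ℝ) := {f ∈ F | ¬ IsBddFun f} with hS
  have hSc : Countable S := (hF.mono (Set.sep_subset _ _)).to_subtype
  have hex : ∀ p : S × ℕ, ∃ x, (p.2 : ℝ) ≤ |p.1.1 x| := by
    rintro ⟨⟨f, hf⟩, l⟩
    by_contra! h
    exact hf.2 ⟨l, fun x => (h x).le⟩
  choose x hx using hex
  set m : Measure E := (Measure.sum fun p => Measure.dirac (x p)).toFinite with hmdef
  have hA : ∀ f ∈ F, ∀ l : ℕ, MeasurableSet {x | (l : ℝ) ≤ |f x|} := fun f hf l =>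
    measurableSet_le measurable_const (hm f hf).abs
  have hpos : ∀ f : S, ∀ l : ℕ, m {x | (l : ℝ) ≤ |f.1 x|} ≠ 0 := by
    intro f l h0
    have h1 := absolutelyContinuous_toFinite (Measure.sum fun p => Measure.dirac (x p)) h0
    rw [Measure.sum_apply _ (hA f f.2.1 l), ENNReal.tsum_eq_zero] at h1
    have h2 := h1 (f, l)
    rw [Measure.dirac_apply' _ (hA f f.2.1 l)] at h2
    simp [hx (f, l)] at h2
  have hd := dense_iInter_of_isOpen (X := E →₁[m] ℝ)
    (ι := S × ℕ × (SignType × (Option ℕ)))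
    (f := fun p => {r | p.2.2.1 = 0 ∨ ∃ l : ℕ, (p.2.1 : ℝ) < l *
      ((p.2.2.2.elim 0 fun _ => (p.2.2.1 : ℝ) • μ : SignedMeasure E) {x | (l : ℝ) ≤ |p.1.1 x|}
      + (p.2.2.2.elim (p.2.2.1 : ℝ) fun j => -(p.2.2.1 : ℝ) * (1 / ((j : ℝ) + 1)))
        * ∫ x in {x | (l : ℝ) ≤ |p.1.1 x|}, r x ∂m)})
    (fun p => by
      rw [Set.ofPred_or]
      exact isOpen_const.union (isOpen_tail_blowup _ _ _ _ _))
    (fun p => by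
      rcases eq_or_ne p.2.2.1 0 with h | h
      · simp [h]
      · refine (dense_tail_blowup (hm _ p.1.2.1) m (hpos p.1) _ ?_ _).mono
          (fun r hr => Or.inr hr)
        have h' : ((p.2.2.1 : SignType) : ℝ) ≠ 0 := by
          rcases hp : p.2.2.1 with _ | _ | _ <;> simp_all
        rcases p.2.2.2 with _ | j
        · simpa using h'
        · simp only [Option.elim_some]
          have : (0 : ℝ) < 1 / ((j : ℝ) + 1) := by positivity
          exact mul_ne_zero (neg_ne_zero.2 h') this.ne')
  obtain ⟨r, hr⟩ := hd.nonempty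
  rw [Set.mem_iInter] at hr
  have hfint := L1.integrable_coeFn r
  refine ⟨m.withDensityᵥ r, fun f hf hfb => ?_⟩
  have hval := fun l : ℕ => withDensityᵥ_apply hfint (hA f hf l)
  have key : ∀ (s : SignType) (hs : s ≠ 0) (o : Option ℕ) (M : ℝ), ∃ l : ℕ, M < l *
      ((o.elim 0 fun _ => (s : ℝ) • μ : SignedMeasure E) {x | (l : ℝ) ≤ |f x|}
      + (o.elim (s : ℝ) fun j => -(s : ℝ) * (1 / ((j : ℝ) + 1)))
        * (m.withDensityᵥ r) {x | (l : ℝ) ≤ |f x|}) := by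
    intro s hs o M
    obtain ⟨K, hK⟩ := exists_nat_ge M
    have := hr (⟨f, hf, hfb⟩, K, s, o)
    simp only [Set.mem_ofPred_eq, hs, false_or] at this
    obtain ⟨l, hl⟩ := this
    exact ⟨l, hK.trans_lt (by rw [hval l]; exact hl)⟩
  refine ⟨sIntegral_eq_zero_of_tail (hm f hf) _ (fun M => ?_) (fun M => ?_),
    fun j => sIntegral_eq_zero_of_tail (hm f hf) _ (fun M => ?_) (fun M => ?_)⟩
  · simpa using key 1 (by decide) none M
  · simpa using key (-1) (by decide) none M
  · obtain ⟨l, hl⟩ := key 1 (by decide) (some j) M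
    refine ⟨l, hl.trans_eq ?_⟩
    simp only [one_div, Option.elim_some, SignType.coe_one, one_smul, FunLike.coe_sub,
      FunLike.coe_smul, Pi.sub_apply, Pi.smul_apply, smul_eq_mul]
    ring
  · obtain ⟨l, hl⟩ := key (-1) (by decide) (some j) M
    refine ⟨l, hl.trans_eq ?_⟩
    simp only [one_div, Option.elim_some, SignType.coe_neg_one, FunLike.coe_sub,
      FunLike.coe_smul, Pi.sub_apply, Pi.smul_apply, smul_eq_mul]
    ring

end SignedIntegral

section Domination

variable {E : Type*} [MeasurableSpace E]

theorem tsum_le_toReal_tsum_ofReal {ι : Type*} {g : ι → ℝ} (hg : ∀ i, 0 ≤ g i) :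
    ∑' i, g i ≤ (∑' i, ENNReal.ofReal (g i)).toReal := by
  by_cases hs : Summable g
  · rw [← ENNReal.ofReal_tsum_of_nonneg hg hs, ENNReal.toReal_ofReal (tsum_nonneg hg)]
  · rw [tsum_eq_zero_of_not_summable hs]
    exact ENNReal.toReal_nonneg

/-- A seminorm dominated by the weighted moments of a countable family is already dominated by
the moments of the bounded functions of that family. -/
theorem seminorm_le_tsum_isBddFun (N : SignedMeasure E → ℝ)
    (hN_smul : ∀ (a : ℝ) (ν : SignedMeasure E), N (a • ν) = |a| * N ν)
    (hN_add : ∀ ν₁ ν₂ : SignedMeasure E, N (ν₁ + ν₂) ≤ N ν₁ + N ν₂)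
    {F : Set (E → ℝ)} (hFcount : F.Countable) (hFmeas : ∀ f ∈ F, Measurable f)
    {d : (E → ℝ) → ℝ} (hd : ∀ f ∈ F, 0 < d f)
    (hNle : ∀ ν : SignedMeasure E, N ν ≤ ∑' f : F, d f * |sIntegral ν f|)
    (μ : SignedMeasure E) :
    ENNReal.ofReal (N μ) ≤
      ∑' f : {f ∈ F | IsBddFun f}, ENNReal.ofReal (d f * |sIntegral μ f|) := by
  set p : SignedMeasure E → ENNReal := fun ν =>
    ∑' f : {f ∈ F | IsBddFun f}, ENNReal.ofReal (d f * |sIntegral ν f|) with hp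
  have hdeg : ∀ ν, (∀ f ∈ F, ¬ IsBddFun f → sIntegral ν f = 0) → N ν ≤ (p ν).toReal := by
    intro ν hν
    refine (hNle ν).trans ((tsum_le_toReal_tsum_ofReal fun f : F =>
      mul_nonneg (hd f.1 f.2).le (abs_nonneg _)).trans_eq ?_)
    congr 1
    rw [hp]
    simp only
    rw [tsum_subtype F fun f => ENNReal.ofReal (d f * |sIntegral ν f|),
      tsum_subtype {f ∈ F | IsBddFun f} fun f => ENNReal.ofReal (d f * |sIntegral ν f|)]
    congr 1
    ext f
    by_cases hf : f ∈ F
    · by_cases hb : IsBddFun f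
      · rw [Set.indicator_of_mem hf, Set.indicator_of_mem (show f ∈ {f ∈ F | IsBddFun f} from
          ⟨hf, hb⟩)]
      · rw [Set.indicator_of_mem hf, Set.indicator_of_notMem (fun h => hb h.2), hν f hf hb]
        simp
    · rw [Set.indicator_of_notMem hf, Set.indicator_of_notMem (fun h => hf h.1)]
  have hp_add : ∀ ν ν', p (ν + ν') ≤ p ν + p ν' := by
    intro ν ν'
    rw [hp]
    simp only
    rw [← ENNReal.tsum_add]
    refine ENNReal.tsum_le_tsum fun f => ?_
    have hdf := (hd f f.2.1).le
    rw [← ENNReal.ofReal_add (mul_nonneg hdf (abs_nonneg _)) (mul_nonneg hdf (abs_nonneg _)),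
      sIntegral_add f.2.2 (hFmeas f f.2.1), ← mul_add]
    exact ENNReal.ofReal_le_ofReal (mul_le_mul_of_nonneg_left (abs_add_le _ _) hdf)
  have hp_smul : ∀ (c : ℝ) ν, p (c • ν) = ENNReal.ofReal |c| * p ν := by
    intro c ν
    rw [hp]
    simp only
    rw [← ENNReal.tsum_mul_left]
    congr 1
    ext f
    rw [← ENNReal.ofReal_mul (abs_nonneg _), sIntegral_smul, abs_mul]
    congr 1
    ring
  obtain ⟨r, hr⟩ := exists_degenerate_direction hFcount hFmeas μ
  have hNr := hdeg r fun f hf hb => (hr f hf hb).1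
  have hNμ := fun j : ℕ => hdeg (μ - (1 / ((j : ℝ) + 1)) • r) fun f hf hb => (hr f hf hb).2 j
  have hsplit : ∀ j : ℕ, N μ ≤ N (μ - (1 / ((j : ℝ) + 1)) • r) + (1 / ((j : ℝ) + 1)) * N r := by
    intro j
    have h := hN_add (μ - (1 / ((j : ℝ) + 1)) • r) ((1 / ((j : ℝ) + 1)) • r)
    rwa [sub_add_cancel, hN_smul, abs_of_pos (by positivity)] at h
  change ENNReal.ofReal (N μ) ≤ p μ
  by_cases hμtop : p μ = ⊤
  · simp [hμtop]
  have hpsub : ∀ j : ℕ, p (μ - (1 / ((j : ℝ) + 1)) • r) ≤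
      p μ + ENNReal.ofReal (1 / ((j : ℝ) + 1)) * p r := by
    intro j
    have h := hp_add μ (-(1 / ((j : ℝ) + 1)) • r)
    have hneg : -(1 / ((j : ℝ) + 1)) • r = -((1 / ((j : ℝ) + 1)) • r) := by
      module
    rwa [hp_smul, abs_neg, abs_of_pos (by positivity), hneg, ← sub_eq_add_neg] at h
  by_cases hrtop : p r = ⊤
  · have h0 : p (μ - (1 / (((0 : ℕ) : ℝ) + 1)) • r) = ⊤ := by
      have h := hp_add μ (-(μ - (1 / (((0 : ℕ) : ℝ) + 1)) • r))
      have hneg := hp_smul (-1) (μ - (1 / (((0 : ℕ) : ℝ) + 1)) • r)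
      rw [abs_neg, abs_one, ENNReal.ofReal_one, one_mul,
        show (-1 : ℝ) • (μ - (1 / (((0 : ℕ) : ℝ) + 1)) • r)
          = -(μ - (1 / (((0 : ℕ) : ℝ) + 1)) • r) by module] at hneg
      rw [hneg] at h
      have hrr : μ + -(μ - (1 / (((0 : ℕ) : ℝ) + 1)) • r) = r := by simp
      rw [hrr, hrtop, top_le_iff, ENNReal.add_eq_top] at h
      exact h.resolve_left hμtop
    have h1 := hNμ 0
    have h2 := hsplit 0
    rw [h0, ENNReal.toReal_top] at h1
    rw [hrtop, ENNReal.toReal_top] at hNr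
    have : N μ ≤ 0 := by
      norm_num at h1 h2
      linarith
    rw [ENNReal.ofReal_of_nonpos this]
    exact zero_le
  · rw [ENNReal.ofReal_le_iff_le_toReal hμtop]
    have hb : ∀ j : ℕ, N μ ≤ (p μ).toReal + 2 * (p r).toReal * (1 / ((j : ℝ) + 1)) := by
      intro j
      have hj : (0 : ℝ) ≤ 1 / ((j : ℝ) + 1) := by positivity
      have h1 := ENNReal.toReal_mono (ENNReal.add_ne_top.2
        ⟨hμtop, ENNReal.mul_ne_top ENNReal.ofReal_ne_top hrtop⟩) (hpsub j)
      rw [ENNReal.toReal_add hμtop (ENNReal.mul_ne_top ENNReal.ofReal_ne_top hrtop),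
        ENNReal.toReal_mul, ENNReal.toReal_ofReal hj] at h1
      have h2 := mul_le_mul_of_nonneg_left hNr hj
      linarith [hNμ j, hsplit j]
    have hlim : Tendsto (fun j : ℕ => (p μ).toReal + 2 * (p r).toReal * (1 / ((j : ℝ) + 1)))
        atTop (nhds ((p μ).toReal + 2 * (p r).toReal * 0)) :=
      (tendsto_one_div_add_atTop_nhds_zero_nat.const_mul _).const_add _
    simpa using ge_of_tendsto' hlim hb

end Domination

section Maximal

variable {Ω : Type*} [MeasurableSpace Ω] {ℙ : Measure Ω}

theorem add_one_rpow_sub_rpow_ge {r : ℝ} (hr0 : 0 < r) (hr1 : r < 1) (L : ℕ) :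
    (1 - r) * ((L : ℝ) + 1) ^ (-r) ≤ ((L : ℝ) + 1) ^ (1 - r) - (L : ℝ) ^ (1 - r) := by
  have hL : (0 : ℝ) < (L : ℝ) + 1 := by positivity
  have h := rpow_one_add_le_one_add_mul_self (s := -(1 / ((L : ℝ) + 1))) (p := 1 - r)
    (by rw [neg_le_neg_iff, div_le_one hL]; simp) (by linarith) (by linarith)
  have h1 : (L : ℝ) = ((L : ℝ) + 1) * (1 + -(1 / ((L : ℝ) + 1))) := by field_simp; ring
  have h2 : (0 : ℝ) ≤ 1 + -(1 / ((L : ℝ) + 1)) := by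
    rw [← sub_eq_add_neg, sub_nonneg, div_le_one hL]; simp
  have h3 : (L : ℝ) ^ (1 - r)
      = ((L : ℝ) + 1) ^ (1 - r) * (1 + -(1 / ((L : ℝ) + 1))) ^ (1 - r) := by
    rw [← Real.mul_rpow hL.le h2, ← h1]
  have h4 : ((L : ℝ) + 1) ^ (1 - r) = ((L : ℝ) + 1) ^ (-r) * ((L : ℝ) + 1) := by
    rw [← Real.rpow_add_one hL.ne']; congr 1; ring
  have h5 : 0 < ((L : ℝ) + 1) ^ (-r) := by positivity
  rw [h3]
  have h6 := mul_le_mul_of_nonneg_left h (show 0 ≤ ((L : ℝ) + 1) ^ (1 - r) by positivity)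
  have h7 : ((L : ℝ) + 1) ^ (1 - r) * (1 + (1 - r) * -(1 / ((L : ℝ) + 1)))
      = ((L : ℝ) + 1) ^ (1 - r) - (1 - r) * ((L : ℝ) + 1) ^ (-r) := by
    rw [h4]; field_simp; ring
  linarith

theorem sum_add_one_rpow_neg_le {r : ℝ} (hr0 : 0 < r) (hr1 : r < 1) (L : ℕ) :
    ∑ i ∈ Finset.range L, ((i : ℝ) + 1) ^ (-r) ≤ (L : ℝ) ^ (1 - r) / (1 - r) := by
  have h1r : 0 < 1 - r := by linarith
  rw [le_div_iff₀ h1r]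
  induction L with
  | zero => simp [Real.zero_rpow h1r.ne']
  | succ L ih =>
    rw [Finset.sum_range_succ, add_mul]
    push_cast
    linarith [add_one_rpow_sub_rpow_ge hr0 hr1 L]

/-- Second moments of partial sums under algebraic decay of covariances. -/
theorem integral_sq_sum_le {r : ℝ} (hr0 : 0 < r) (hr1 : r < 1) {V : ℝ} (hV : 0 ≤ V)
    {Z : ℕ → Ω → ℝ} (hZ : ∀ i, MemLp (Z i) 2 ℙ) (hvar : ∀ i, ∫ ω, Z i ω ^ 2 ∂ℙ ≤ V)
    (hcov : ∀ i m : ℕ, |∫ ω, Z i ω * Z (i + (m + 1)) ω ∂ℙ| ≤ V * ((m : ℝ) + 1) ^ (-r))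
    (L s : ℕ) :
    ∫ ω, (∑ i ∈ Finset.range L, Z (s + i) ω) ^ 2 ∂ℙ
      ≤ V * (1 + 2 / (1 - r)) * (L : ℝ) ^ (2 - r) := by
  have h1r : 0 < 1 - r := by linarith
  induction L generalizing s with
  | zero => simp [Real.zero_rpow (show 2 - r ≠ 0 by linarith)]
  | succ L ih =>
    have hsum : MemLp (fun ω => ∑ i ∈ Finset.range L, Z (s + 1 + i) ω) 2 ℙ :=
      memLp_finsetSum _ fun i _ => hZ _
    have hprod : ∀ i, Integrable (fun ω => Z s ω * Z (s + (i + 1)) ω) ℙ := fun i =>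
      (hZ s).integrable_mul (hZ _)
    have hexp : ∀ ω, (∑ i ∈ Finset.range (L + 1), Z (s + i) ω) ^ 2
        = (∑ i ∈ Finset.range L, Z (s + 1 + i) ω) ^ 2
          + (2 * ∑ i ∈ Finset.range L, Z s ω * Z (s + (i + 1)) ω + Z s ω ^ 2) := by
      intro ω
      rw [Finset.sum_range_succ', ← Finset.mul_sum, add_zero]
      have : ∑ i ∈ Finset.range L, Z (s + (i + 1)) ω = ∑ i ∈ Finset.range L, Z (s + 1 + i) ω :=
        Finset.sum_congr rfl fun i _ => by rw [add_assoc, add_comm i 1]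
      rw [this]
      ring
    simp_rw [hexp]
    have hi2 : Integrable (fun ω => 2 * ∑ i ∈ Finset.range L, Z s ω * Z (s + (i + 1)) ω) ℙ :=
      (integrable_finsetSum _ fun i _ => hprod i).const_mul 2
    have hi3 : Integrable (fun ω => 2 * ∑ i ∈ Finset.range L, Z s ω * Z (s + (i + 1)) ω
        + Z s ω ^ 2) ℙ := hi2.add (hZ s).integrable_sq
    rw [integral_add hsum.integrable_sq hi3,
      integral_add hi2 (hZ s).integrable_sq, integral_const_mul,
      integral_finsetSum _ fun i _ => hprod i]
    have hc : ∑ i ∈ Finset.range L, ∫ ω, Z s ω * Z (s + (i + 1)) ω ∂ℙ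
        ≤ V * ((L : ℝ) ^ (1 - r) / (1 - r)) := by
      refine (Finset.sum_le_sum fun i _ => (le_abs_self _).trans (hcov s i)).trans ?_
      rw [← Finset.mul_sum]
      exact mul_le_mul_of_nonneg_left (sum_add_one_rpow_neg_le hr0 hr1 L) hV
    have h1 := ih (s + 1)
    have h2 := hvar s
    have hLL : (L : ℝ) ^ (1 - r) ≤ ((L : ℝ) + 1) ^ (1 - r) :=
      Real.rpow_le_rpow (by positivity) (by linarith) h1r.le
    have hL1 : (1 : ℝ) ≤ ((L : ℝ) + 1) ^ (1 - r) :=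
      Real.one_le_rpow (by linarith [Nat.cast_nonneg (α := ℝ) L]) h1r.le
    have hp1 : (L : ℝ) ^ (2 - r) = (L : ℝ) * (L : ℝ) ^ (1 - r) := by
      rcases Nat.eq_zero_or_pos L with h | h
      · subst h; simp [Real.zero_rpow (show 2 - r ≠ 0 by linarith)]
      · rw [mul_comm, ← Real.rpow_add_one (by positivity)]; congr 1; ring
    have hp2 : ((L : ℝ) + 1) ^ (2 - r) = ((L : ℝ) + 1) * ((L : ℝ) + 1) ^ (1 - r) := by
      rw [mul_comm, ← Real.rpow_add_one (by positivity)]; congr 1; ring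
    push_cast
    rw [hp2]
    rw [hp1] at h1
    set a := (L : ℝ) ^ (1 - r)
    set a' := ((L : ℝ) + 1) ^ (1 - r)
    have hA : 0 ≤ 2 / (1 - r) := by positivity
    have e1 : V * (1 + 2 / (1 - r)) * (L * a) ≤ V * (1 + 2 / (1 - r)) * (L * a') := by
      gcongr
    have e2 : V ≤ V * a' := le_mul_of_one_le_right hV hL1
    have e3 : 2 * (V * (a / (1 - r))) ≤ V * (2 / (1 - r)) * a' := by
      have : 2 * (V * (a / (1 - r))) = V * (2 / (1 - r)) * a := by ring
      rw [this]
      gcongr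
    nlinarith

variable [IsProbabilityMeasure ℙ]

theorem lintegral_ofReal_sqrt_le {Y : Ω → ℝ} (hY : Integrable Y ℙ) (h0 : ∀ ω, 0 ≤ Y ω) {B : ℝ}
    (hB : ∫ ω, Y ω ∂ℙ ≤ B) :
    ∫⁻ ω, ENNReal.ofReal (Real.sqrt (Y ω)) ∂ℙ ≤ ENNReal.ofReal (Real.sqrt B) := by
  have hi : Integrable (fun ω => Real.sqrt (Y ω)) ℙ := by
    refine Integrable.mono' ((integrable_const (1 : ℝ)).add hY)
      (Real.continuous_sqrt.comp_aestronglyMeasurable hY.aestronglyMeasurable)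
      (ae_of_all _ fun ω => ?_)
    rw [Real.norm_of_nonneg (Real.sqrt_nonneg _)]
    refine Real.sqrt_le_iff.2 ⟨?_, ?_⟩ <;> simp only [Pi.add_apply] <;> nlinarith [h0 ω]
  rw [← ofReal_integral_eq_lintegral_ofReal hi (ae_of_all _ fun ω => Real.sqrt_nonneg _)]
  refine ENNReal.ofReal_le_ofReal (le_trans ?_ (Real.sqrt_le_sqrt hB))
  exact Real.strictConcaveOn_sqrt.concaveOn.le_map_integral Real.continuous_sqrt.continuousOn
    isClosed_Ici (ae_of_all _ h0) hY hi

theorem sum_range_two_mul {M : Type*} [AddCommMonoid M] (z : ℕ → M) (s t : ℕ) :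
    ∑ i ∈ Finset.range t, (z (2 * (s + i)) + z (2 * (s + i) + 1))
      = ∑ i ∈ Finset.range (2 * t), z (2 * s + i) := by
  induction t with
  | zero => simp
  | succ t ih =>
    rw [Finset.sum_range_succ, ih, show 2 * (t + 1) = 2 * t + 1 + 1 by ring,
      Finset.sum_range_succ, Finset.sum_range_succ, add_assoc, mul_add, ← add_assoc (2 * s)]

/-- Dyadic maximal inequality: second moments of order `t ^ (2 - r)` with `r < 1` control the
expected maximum without logarithmic loss. -/
theorem exists_maximal_dyadic {r : ℝ} (hr1 : r < 1) (L : ℕ) :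
    ∀ {σ : ℝ} (_ : 0 ≤ σ) {Z : ℕ → Ω → ℝ} (_ : ∀ i, Measurable (Z i)) (_ : ∀ i, MemLp (Z i) 2 ℙ)
      (_ : ∀ t s : ℕ, ∫ ω, (∑ i ∈ Finset.range t, Z (s + i) ω) ^ 2 ∂ℙ
        ≤ σ ^ 2 * (t : ℝ) ^ (2 - r)),
      ∃ W : Ω → ENNReal, Measurable W ∧
        (∀ ω, ∀ j ≤ 2 ^ L, ENNReal.ofReal |∑ i ∈ Finset.range j, Z i ω| ≤ W ω) ∧
        ∫⁻ ω, W ω ∂ℙ ≤ ENNReal.ofReal (σ *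
          ((1 + √2 / (2 ^ (1 - r / 2) - √2)) * (2 ^ (1 - r / 2) : ℝ) ^ L
            - √2 / (2 ^ (1 - r / 2) - √2) * √2 ^ L)) := by
  have hqs : √2 < (2 : ℝ) ^ (1 - r / 2) := by
    rw [Real.sqrt_eq_rpow]
    exact Real.rpow_lt_rpow_of_exponent_lt (by norm_num) (by linarith)
  have hs0 : 0 < √2 := by positivity
  have hq2 : ((2 : ℝ) ^ (1 - r / 2)) ^ 2 = 2 ^ (2 - r) := by
    rw [← Real.rpow_natCast, ← Real.rpow_mul (by norm_num)]
    congr 1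
    push_cast
    ring
  set q : ℝ := 2 ^ (1 - r / 2) with hq
  have hK : 0 < √2 / (q - √2) := div_pos hs0 (by linarith)
  have hKq : √2 / (q - √2) * (q - √2) = √2 := div_mul_cancel₀ _ (by linarith)
  set K := √2 / (q - √2) with hKdef
  induction L with
  | zero =>
    intro σ hσ Z hm hZ hmom
    refine ⟨fun ω => ENNReal.ofReal (Real.sqrt (Z 0 ω ^ 2)),
      ((hm 0).pow_const 2).sqrt.ennreal_ofReal, fun ω j hj => ?_, ?_⟩
    · simp only [Real.sqrt_sq_eq_abs]
      rcases Nat.le_one_iff_eq_zero_or_eq_one.1 hj with h | h <;> simp [h]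
    · refine (lintegral_ofReal_sqrt_le (hZ 0).integrable_sq (fun ω => sq_nonneg _)
        (B := σ ^ 2) ?_).trans (ENNReal.ofReal_le_ofReal ?_)
      · simpa using hmom 1 0
      · rw [Real.sqrt_sq hσ]
        simp
  | succ L ih =>
    intro σ hσ Z hm hZ hmom
    have hq0 : 0 < q := hs0.trans hqs
    obtain ⟨W, hWm, hW, hWi⟩ := ih (σ := σ * q) (by positivity)
      (Z := fun i ω => Z (2 * i) ω + Z (2 * i + 1) ω) (fun i => (hm _).add (hm _))
      (fun i => (hZ _).add (hZ _)) (fun t s => by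
        have := hmom (2 * t) (2 * s)
        have h : ∀ ω, ∑ i ∈ Finset.range t, (Z (2 * (s + i)) ω + Z (2 * (s + i) + 1) ω)
            = ∑ i ∈ Finset.range (2 * t), Z (2 * s + i) ω := fun ω =>
          sum_range_two_mul (fun i => Z i ω) s t
        simp only [h]
        refine this.trans_eq ?_
        push_cast
        rw [Real.mul_rpow (by norm_num) (by positivity), mul_pow, hq2]
        ring)
    have hfint : Integrable (fun ω => ∑ i ∈ Finset.range (2 ^ (L + 1)), Z i ω ^ 2) ℙ :=
      integrable_finsetSum _ fun i _ => (hZ i).integrable_sq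
    have hmeas : Measurable fun ω => ENNReal.ofReal
        (Real.sqrt (∑ i ∈ Finset.range (2 ^ (L + 1)), Z i ω ^ 2)) :=
      (Finset.measurable_fun_sum _ fun i _ => (hm i).pow_const 2).sqrt.ennreal_ofReal
    refine ⟨fun ω => W ω + ENNReal.ofReal
      (Real.sqrt (∑ i ∈ Finset.range (2 ^ (L + 1)), Z i ω ^ 2)), hWm.add hmeas,
      fun ω j hj => ?_, ?_⟩
    · have hev : ∀ t, ∑ i ∈ Finset.range (2 * t), Z i ω
          = ∑ i ∈ Finset.range t, (Z (2 * i) ω + Z (2 * i + 1) ω) := fun t => by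
        have := sum_range_two_mul (fun i => Z i ω) 0 t
        simpa using this.symm
      rcases Nat.even_or_odd' j with ⟨t, rfl | rfl⟩
      · rw [hev]
        exact (hW ω t (by rw [pow_succ] at hj; omega)).trans le_self_add
      · rw [Finset.sum_range_succ, hev]
        refine (ENNReal.ofReal_le_ofReal (abs_add_le _ _)).trans ?_
        rw [ENNReal.ofReal_add (abs_nonneg _) (abs_nonneg _)]
        refine add_le_add (hW ω t (by rw [pow_succ] at hj; omega))
          (ENNReal.ofReal_le_ofReal (Real.le_sqrt_of_sq_le ?_))
        rw [sq_abs]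
        exact Finset.single_le_sum (f := fun i => Z i ω ^ 2) (fun i _ => sq_nonneg _)
          (Finset.mem_range.2 (by omega))
    · have hB : ∫ ω, ∑ i ∈ Finset.range (2 ^ (L + 1)), Z i ω ^ 2 ∂ℙ ≤ σ ^ 2 * 2 ^ (L + 1) := by
        rw [integral_finsetSum _ fun i _ => (hZ i).integrable_sq]
        refine (Finset.sum_le_card_nsmul _ _ (σ ^ 2) fun i _ => ?_).trans_eq ?_
        · simpa using hmom 1 i
        · simp [mul_comm]
      rw [lintegral_add_left hWm]
      refine (add_le_add hWi (lintegral_ofReal_sqrt_le hfint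
        (fun ω => Finset.sum_nonneg fun i _ => sq_nonneg _) hB)).trans ?_
      have hsL : √(σ ^ 2 * 2 ^ (L + 1)) = σ * √2 ^ (L + 1) := by
        rw [Real.sqrt_mul (sq_nonneg _), Real.sqrt_sq hσ, Real.sqrt_eq_rpow, Real.sqrt_eq_rpow,
          ← Real.rpow_natCast, ← Real.rpow_natCast, ← Real.rpow_mul (by norm_num),
          ← Real.rpow_mul (by norm_num), mul_comm (1 / 2 : ℝ)]
      have hpow : √2 ^ L ≤ q ^ L := pow_le_pow_left₀ hs0.le hqs.le L
      have hqL : 0 < q ^ L := by positivity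
      rw [← ENNReal.ofReal_add (mul_nonneg (by positivity) (by nlinarith)) (by positivity), hsL]
      refine ENNReal.ofReal_le_ofReal (le_of_eq ?_)
      rw [pow_succ, pow_succ]
      linear_combination (-σ * √2 ^ L) * hKq

theorem exists_maximal {r : ℝ} (hr1 : r < 1) {m : ℝ} {σ : ℝ} (hσ : 0 ≤ σ)
    {Z : ℕ → Ω → ℝ} (hm : ∀ i, Measurable (Z i)) (hZ : ∀ i, MemLp (Z i) 2 ℙ)
    (hmom : ∀ t s : ℕ, ∫ ω, (∑ i ∈ Finset.range t, Z (s + i) ω) ^ 2 ∂ℙ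
        ≤ σ ^ 2 * (t : ℝ) ^ (2 - r)) :
    ∃ W : Ω → ENNReal, Measurable W ∧
        (∀ ω, ∀ j : ℕ, (j : ℝ) ≤ m → ENNReal.ofReal |∑ i ∈ Finset.range j, Z i ω| ≤ W ω) ∧
        ∫⁻ ω, W ω ∂ℙ ≤ ENNReal.ofReal (σ *
          ((1 + √2 / (2 ^ (1 - r / 2) - √2)) * 2 ^ (1 - r / 2) * m ^ (1 - r / 2))) := by
  rcases lt_or_ge m 1 with h1 | h1
  · refine ⟨fun _ => 0, measurable_const, fun ω j hj => ?_, by simp⟩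
    have : j = 0 := by
      have : (j : ℝ) < 1 := hj.trans_lt h1
      exact_mod_cast Nat.lt_one_iff.1 (by exact_mod_cast this)
    simp [this]
  · obtain ⟨L, hL1, hL2⟩ := exists_nat_pow_near h1 (show (1 : ℝ) < 2 by norm_num)
    obtain ⟨W, hWm, hW, hWi⟩ := exists_maximal_dyadic hr1 (L + 1) hσ hm hZ hmom
    refine ⟨W, hWm, fun ω j hj => hW ω j ?_, hWi.trans (ENNReal.ofReal_le_ofReal
      (mul_le_mul_of_nonneg_left ?_ hσ))⟩
    · exact_mod_cast (hj.trans hL2.le)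
    · have hqs : √2 < (2 : ℝ) ^ (1 - r / 2) := by
        rw [Real.sqrt_eq_rpow]
        exact Real.rpow_lt_rpow_of_exponent_lt (by norm_num) (by linarith)
      have hK : 0 < √2 / ((2 : ℝ) ^ (1 - r / 2) - √2) := div_pos (by positivity) (by linarith)
      have hpow : ((2 : ℝ) ^ (1 - r / 2)) ^ L ≤ m ^ (1 - r / 2) := by
        rw [← Real.rpow_natCast, ← Real.rpow_mul (by norm_num), mul_comm,
          Real.rpow_mul (by norm_num), Real.rpow_natCast]
        exact Real.rpow_le_rpow (by positivity) hL1 (by linarith)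
      have h3 : 0 ≤ √2 / ((2 : ℝ) ^ (1 - r / 2) - √2) * √2 ^ (L + 1) := by positivity
      rw [pow_succ]
      have h4 : (1 + √2 / ((2 : ℝ) ^ (1 - r / 2) - √2)) * (((2 : ℝ) ^ (1 - r / 2)) ^ L
          * 2 ^ (1 - r / 2)) ≤ (1 + √2 / ((2 : ℝ) ^ (1 - r / 2) - √2)) * 2 ^ (1 - r / 2)
          * m ^ (1 - r / 2) := by
        rw [mul_comm (((2 : ℝ) ^ (1 - r / 2)) ^ L), ← mul_assoc]
        exact mul_le_mul_of_nonneg_left hpow (by positivity)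
      linarith

end Maximal

section SeminormMaximal

variable {Ω : Type*} [MeasurableSpace Ω] {ℙ : Measure Ω}
  {E : Type*} [MeasurableSpace E]

theorem covar_comm (Y Z : Ω → ℝ) : covar ℙ Y Z = covar ℙ Z Y := by
  simp only [covar, mul_comm]

/-- The first `n` terms of `U` have covariances decaying with exponent `r` along every function of
the family `G`, with a multiplicative constant `φ f ^ 2`. -/
def HasDecay (ℙ : Measure Ω) (G : Set (E → ℝ)) (φ : (E → ℝ) → ℝ) (r : ℝ) (n : ℕ)
    (U : ℕ → Ω → E) : Prop :=
  (∀ i, Measurable (U i)) ∧ ∀ f ∈ G,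
    (∀ i < n, variance' ℙ (fun ω => f (U i ω)) ≤ φ f ^ 2) ∧
    ∀ i < n, ∀ j < n, i ≠ j →
      |covar ℙ (fun ω => f (U i ω)) (fun ω => f (U j ω))| ≤ φ f ^ 2 * |(i : ℝ) - j| ^ (-r)

theorem HasDecay.mono {G : Set (E → ℝ)} {φ : (E → ℝ) → ℝ} {r : ℝ} {n m : ℕ} {U : ℕ → Ω → E}
    (h : HasDecay ℙ G φ r n U) (hm : m ≤ n) : HasDecay ℙ G φ r m U :=
  ⟨h.1, fun f hf => ⟨fun i hi => (h.2 f hf).1 i (hi.trans_le hm), fun i hi j hj =>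
    (h.2 f hf).2 i (hi.trans_le hm) j (hj.trans_le hm)⟩⟩

theorem HasDecay.reverse {G : Set (E → ℝ)} {φ : (E → ℝ) → ℝ} {r : ℝ} {n : ℕ} {U : ℕ → Ω → E}
    (h : HasDecay ℙ G φ r n U) : HasDecay ℙ G φ r n (fun i => U (n - 1 - i)) := by
  refine ⟨fun i => h.1 _, fun f hf => ⟨fun i hi => (h.2 f hf).1 _ (by omega),
    fun i hi j hj hij => ?_⟩⟩
  have := (h.2 f hf).2 (n - 1 - i) (by omega) (n - 1 - j) (by omega) (by omega)
  have e : |((n - 1 - i : ℕ) : ℝ) - ((n - 1 - j : ℕ) : ℝ)| = |(i : ℝ) - j| := by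
    rw [Nat.sub_sub, Nat.sub_sub, Nat.cast_sub (by omega), Nat.cast_sub (by omega), abs_sub_comm]
    congr 1
    push_cast
    ring
  rwa [e] at this

variable [IsProbabilityMeasure ℙ]

/-- The sum of the first `j` centred empirical increments. -/
noncomputable def empDev (ℙ : Measure Ω) [IsProbabilityMeasure ℙ] (U : ℕ → Ω → E) (ω : Ω)
    (j : ℕ) : SignedMeasure E :=
  ∑ i ∈ Finset.range j,
    ((Measure.dirac (U i ω)).toSignedMeasure - (ℙ.map (U i)).toSignedMeasure)

theorem sIntegral_empDev {U : ℕ → Ω → E} (hU : ∀ i, Measurable (U i)) {f : E → ℝ}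
    (hf : IsBddFun f) (hm : Measurable f) (ω : Ω) (j : ℕ) :
    sIntegral (empDev ℙ U ω j) f
      = ∑ i ∈ Finset.range j, (f (U i ω) - ∫ ω', f (U i ω') ∂ℙ) := by
  rw [empDev, sIntegral_sum hf hm]
  refine Finset.sum_congr rfl fun i _ => ?_
  rw [sIntegral_toSignedMeasure_sub hf hm, integral_dirac' _ _ hm.stronglyMeasurable,
    integral_map (hU i).aemeasurable hm.aestronglyMeasurable]

/-- `R` admits maximal bounds of order `K * m ^ β` over the indices `j ≤ J`. -/
def HasMax (ℙ : Measure Ω) (R : Ω → ℕ → ℝ) (J : ℕ) (K β : ℝ) : Prop :=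
  ∀ m : ℝ, ∃ W : Ω → ENNReal, Measurable W ∧
    (∀ ω, ∀ j ≤ J, (j : ℝ) ≤ m → ENNReal.ofReal (R ω j) ≤ W ω) ∧
    ∫⁻ ω, W ω ∂ℙ ≤ ENNReal.ofReal (K * m ^ β)

/-- The constant of the maximal inequality with exponent `r`. -/
noncomputable def maxConst (r : ℝ) : ℝ :=
  √(1 + 2 / (1 - r)) * ((1 + √2 / (2 ^ (1 - r / 2) - √2)) * 2 ^ (1 - r / 2))

theorem maxConst_pos {r : ℝ} (hr1 : r < 1) : 0 < maxConst r := by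
  have hqs : √2 < (2 : ℝ) ^ (1 - r / 2) := by
    rw [Real.sqrt_eq_rpow]
    exact Real.rpow_lt_rpow_of_exponent_lt (by norm_num) (by linarith)
  have hK : 0 < √2 / ((2 : ℝ) ^ (1 - r / 2) - √2) := div_pos (by positivity) (by linarith)
  have : 0 < 1 - r := by linarith
  unfold maxConst
  positivity

theorem exists_maximal_of_hasDecay {r : ℝ} (hr0 : 0 < r) (hr1 : r < 1) {G : Set (E → ℝ)}
    {φ : (E → ℝ) → ℝ} {J : ℕ} {U : ℕ → Ω → E} (h : HasDecay ℙ G φ r J U) {f : E → ℝ} (hf : f ∈ G)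
    (hφ : 0 ≤ φ f) (hb : IsBddFun f) (hm : Measurable f) (m : ℝ) :
    ∃ W : Ω → ENNReal, Measurable W ∧
      (∀ ω, ∀ j ≤ J, (j : ℝ) ≤ m → ENNReal.ofReal |sIntegral (empDev ℙ U ω j) f| ≤ W ω) ∧
      ∫⁻ ω, W ω ∂ℙ ≤ ENNReal.ofReal (φ f * (maxConst r * m ^ (1 - r / 2))) := by
  have h1r : 0 < 1 - r := by linarith
  set Z : ℕ → Ω → ℝ := fun i ω => if i < J then f (U i ω) - ∫ ω', f (U i ω') ∂ℙ else 0 with hZ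
  have hZm : ∀ i, Measurable (Z i) := fun i => by
    by_cases hi : i < J
    · simpa [hZ, hi] using (hm.comp (h.1 i)).sub_const _
    · simp [hZ, hi]
  have hZ2 : ∀ i, MemLp (Z i) 2 ℙ := fun i => by
    obtain ⟨M, hM⟩ := hb
    by_cases hi : i < J
    · have : MemLp (fun ω => f (U i ω)) 2 ℙ :=
        MemLp.of_bound (hm.comp (h.1 i)).aestronglyMeasurable M (ae_of_all _ fun ω => hM _)
      simp only [hZ, hi, if_true]
      exact this.sub (memLp_const _)
    · simp [hZ, hi]
  have hvar : ∀ i, ∫ ω, Z i ω ^ 2 ∂ℙ ≤ φ f ^ 2 := fun i => by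
    by_cases hi : i < J
    · have := (h.2 f hf).1 i hi
      simpa [hZ, hi, variance', covar, sq] using this
    · simp [hZ, hi, sq_nonneg]
  have hcov : ∀ i k : ℕ, |∫ ω, Z i ω * Z (i + (k + 1)) ω ∂ℙ| ≤ φ f ^ 2 * ((k : ℝ) + 1) ^ (-r) := by
    intro i k
    by_cases hi : i + (k + 1) < J
    · have := (h.2 f hf).2 i (by omega) _ hi (by omega)
      have e : |(i : ℝ) - ((i + (k + 1) : ℕ) : ℝ)| = (k : ℝ) + 1 := by
        rw [abs_sub_comm]
        push_cast
        rw [add_sub_cancel_left, abs_of_nonneg (by positivity)]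
      rw [e] at this
      simpa [hZ, hi, show i < J by omega, covar] using this
    · simp only [hZ, hi, if_false, mul_zero, integral_zero, abs_zero]
      positivity
  obtain ⟨W, hWm, hW, hWi⟩ := exists_maximal (m := m) hr1
    (σ := φ f * √(1 + 2 / (1 - r))) (by positivity) hZm hZ2 (fun t s => by
      rw [mul_pow, Real.sq_sqrt (by positivity)]
      exact integral_sq_sum_le hr0 hr1 (sq_nonneg _) hZ2 hvar hcov t s)
  refine ⟨W, hWm, fun ω j hj hjm => ?_, hWi.trans_eq ?_⟩
  · rw [sIntegral_empDev h.1 hb hm]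
    convert hW ω j hjm using 4 with i hi
    simp [hZ, (Finset.mem_range.1 hi).trans_le hj]
  · rw [maxConst]
    congr 1
    ring

theorem hasMax_empDev {r : ℝ} (hr0 : 0 < r) (hr1 : r < 1) {G : Set (E → ℝ)} (hG : G.Countable)
    (hGb : ∀ f ∈ G, IsBddFun f) (hGm : ∀ f ∈ G, Measurable f)
    {φ d : (E → ℝ) → ℝ} (hφ : ∀ f ∈ G, 0 ≤ φ f) (hd : ∀ f ∈ G, 0 < d f) {K : ℝ} (hK : 0 ≤ K)
    (hsum : ∑' f : G, ENNReal.ofReal (d f * φ f) ≤ ENNReal.ofReal K)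
    {N : SignedMeasure E → ℝ}
    (hN : ∀ μ, ENNReal.ofReal (N μ) ≤ ∑' f : G, ENNReal.ofReal (d f * |sIntegral μ f|))
    {J : ℕ} {U : ℕ → Ω → E} (h : HasDecay ℙ G φ r J U) :
    HasMax ℙ (fun ω j => N (empDev ℙ U ω j)) J (K * maxConst r) (1 - r / 2) := by
  intro m
  have := hG.to_subtype
  choose W hWm hW hWi using fun f : G => exists_maximal_of_hasDecay hr0 hr1 h f.2 (hφ f f.2)
    (hGb f f.2) (hGm f f.2) m
  refine ⟨fun ω => ∑' f : G, ENNReal.ofReal (d f) * W f ω,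
    Measurable.tsum fun f => (hWm f).const_mul _, fun ω j hj hjm => ?_, ?_⟩
  · refine (hN _).trans (ENNReal.tsum_le_tsum fun f => ?_)
    rw [ENNReal.ofReal_mul (hd f f.2).le]
    exact mul_le_mul_right (hW f ω j hj hjm) _
  · rw [lintegral_tsum fun f => ((hWm f).const_mul _).aemeasurable]
    calc ∑' f : G, ∫⁻ ω, ENNReal.ofReal (d f) * W f ω ∂ℙ
        ≤ ∑' f : G, ENNReal.ofReal (d f * φ f) * ENNReal.ofReal (maxConst r * m ^ (1 - r / 2)) := by
          refine ENNReal.tsum_le_tsum fun f => ?_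
          rw [lintegral_const_mul _ (hWm f), ENNReal.ofReal_mul (hd f f.2).le, mul_assoc,
            ← ENNReal.ofReal_mul (hφ f f.2)]
          exact mul_le_mul_right (hWi f) _
      _ = (∑' f : G, ENNReal.ofReal (d f * φ f))
            * ENNReal.ofReal (maxConst r * m ^ (1 - r / 2)) := ENNReal.tsum_mul_right
      _ ≤ ENNReal.ofReal K * ENNReal.ofReal (maxConst r * m ^ (1 - r / 2)) :=
          mul_le_mul_left hsum _
      _ = ENNReal.ofReal (K * maxConst r * m ^ (1 - r / 2)) := by
          rw [← ENNReal.ofReal_mul hK, mul_assoc]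

end SeminormMaximal

section TailBounds

variable {Ω : Type*} [MeasurableSpace Ω] {ℙ : Measure Ω} {R : Ω → ℕ → ℝ} {J : ℕ} {K β : ℝ}

theorem HasMax.measure_block_le (h : HasMax ℙ R J K β) (m : ℝ) {t : ℝ} (ht : 0 < t) :
    ℙ {ω | ∃ j ≤ J, (j : ℝ) ≤ m ∧ t ≤ R ω j} ≤ ENNReal.ofReal (K * m ^ β / t) := by
  obtain ⟨W, hWm, hW, hWi⟩ := h m
  have hsub : {ω | ∃ j ≤ J, (j : ℝ) ≤ m ∧ t ≤ R ω j} ⊆ {ω | ENNReal.ofReal t ≤ W ω} := by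
    rintro ω ⟨j, hj, hjm, hjt⟩
    exact (ENNReal.ofReal_le_ofReal hjt).trans (hW ω j hj hjm)
  refine (measure_mono hsub).trans ?_
  rw [ENNReal.ofReal_div_of_pos ht]
  refine (meas_ge_le_lintegral_div hWm.aemeasurable (by simpa using ht)
    ENNReal.ofReal_ne_top).trans (ENNReal.div_le_div_right hWi _)

/-- Maximal deviations relative to a linear boundary, beyond distance `m`. -/
theorem HasMax.measure_linear_le (h : HasMax ℙ R J K β) (hK : 0 ≤ K) (hβ : β < 1) {c m : ℝ}
    (hc : 0 < c) (hm : 0 < m) :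
    ℙ {ω | ∃ j ≤ J, m < j ∧ c * j ≤ R ω j}
      ≤ ENNReal.ofReal (K / c * 2 ^ β / (1 - 2 ^ (β - 1)) * m ^ (β - 1)) := by
  have hq0 : (0 : ℝ) < 2 ^ (β - 1) := by positivity
  have hq1 : (2 : ℝ) ^ (β - 1) < 1 := Real.rpow_lt_one_of_one_lt_of_neg (by norm_num) (by linarith)
  have hsub : {ω | ∃ j ≤ J, m < j ∧ c * j ≤ R ω j} ⊆
      ⋃ i : ℕ, {ω | ∃ j ≤ J, (j : ℝ) ≤ m * 2 ^ (i + 1) ∧ c * (m * 2 ^ i) ≤ R ω j} := by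
    rintro ω ⟨j, hj, hjm, hjR⟩
    obtain ⟨i, hi1, hi2⟩ := exists_nat_pow_near (x := (j : ℝ) / m) (y := 2)
      ((one_le_div hm).2 hjm.le) (by norm_num)
    rw [le_div_iff₀ hm] at hi1
    rw [div_lt_iff₀ hm] at hi2
    refine Set.mem_iUnion.2 ⟨i, j, hj, by linarith, le_trans ?_ hjR⟩
    exact mul_le_mul_of_nonneg_left (by linarith) hc.le
  have hterm : ∀ i : ℕ, K * (m * 2 ^ (i + 1)) ^ β / (c * (m * 2 ^ i))
      = K / c * 2 ^ β * m ^ (β - 1) * ((2 : ℝ) ^ (β - 1)) ^ i := by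
    intro i
    have e1 : (m * 2 ^ (i + 1)) ^ β = m ^ (β - 1) * m *
        (2 ^ β * (((2 : ℝ) ^ (β - 1)) ^ i * 2 ^ i)) := by
      rw [Real.mul_rpow hm.le (by positivity), ← Real.rpow_add_one hm.ne', sub_add_cancel,
        ← mul_pow, ← Real.rpow_add_one (by norm_num), sub_add_cancel, ← Real.rpow_natCast,
        ← Real.rpow_mul (by norm_num), mul_comm _ β, Real.rpow_mul (by norm_num),
        Real.rpow_natCast, pow_succ']
    rw [e1]
    field_simp
  refine (measure_mono hsub).trans ((measure_iUnion_le _).trans ?_)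
  calc ∑' i : ℕ, ℙ {ω | ∃ j ≤ J, (j : ℝ) ≤ m * 2 ^ (i + 1) ∧ c * (m * 2 ^ i) ≤ R ω j}
      ≤ ∑' i : ℕ, ENNReal.ofReal (K / c * 2 ^ β * m ^ (β - 1) * ((2 : ℝ) ^ (β - 1)) ^ i) := by
        refine ENNReal.tsum_le_tsum fun i => ?_
        rw [← hterm]
        exact h.measure_block_le _ (by positivity)
    _ = ENNReal.ofReal (∑' i : ℕ, K / c * 2 ^ β * m ^ (β - 1) * ((2 : ℝ) ^ (β - 1)) ^ i) :=
        (ENNReal.ofReal_tsum_of_nonneg (fun i => by positivity)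
          ((summable_geometric_of_lt_one hq0.le hq1).mul_left _)).symm
    _ = _ := by
        rw [tsum_mul_left, tsum_geometric_of_lt_one hq0.le hq1]
        congr 1
        field_simp

/-- Maximal deviations relative to a boundary growing like `j ^ γ`. -/
theorem HasMax.measure_power_le (h : HasMax ℙ R J K β) (hK : 0 ≤ K) {γ : ℝ} (hγ : 0 ≤ γ) {n : ℕ}
    (hJn : J ≤ n) {c : ℝ} (hc : 0 < c) :
    ℙ {ω | ∃ j ≤ J, 1 ≤ j ∧ c * (j : ℝ) ^ γ ≤ R ω j}
      ≤ ENNReal.ofReal (K / c * 2 ^ β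
        * ∑ i ∈ Finset.range (Nat.log 2 n + 1), ((2 : ℝ) ^ (β - γ)) ^ i) := by
  have hsub : {ω | ∃ j ≤ J, 1 ≤ j ∧ c * (j : ℝ) ^ γ ≤ R ω j} ⊆
      ⋃ i ∈ Finset.range (Nat.log 2 n + 1),
        {ω | ∃ j ≤ J, (j : ℝ) ≤ 2 ^ (i + 1) ∧ c * ((2 : ℝ) ^ i) ^ γ ≤ R ω j} := by
    rintro ω ⟨j, hj, hj1, hjR⟩
    have h1 : 2 ^ Nat.log 2 j ≤ j := Nat.pow_log_le_self 2 (by omega)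
    have h2 : j < 2 ^ (Nat.log 2 j + 1) := Nat.lt_pow_succ_log_self (by norm_num) j
    refine Set.mem_biUnion (x := Nat.log 2 j) ?_ ⟨j, hj, by exact_mod_cast h2.le, le_trans ?_ hjR⟩
    · simpa using Nat.lt_succ_of_le (Nat.log_mono_right (hj.trans hJn))
    · refine mul_le_mul_of_nonneg_left (Real.rpow_le_rpow (by positivity) ?_ hγ) hc.le
      exact_mod_cast h1
  have hterm : ∀ i : ℕ, K * ((2 : ℝ) ^ (i + 1)) ^ β / (c * ((2 : ℝ) ^ i) ^ γ)
      = K / c * 2 ^ β * ((2 : ℝ) ^ (β - γ)) ^ i := by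
    intro i
    have e : ∀ y : ℝ, ((2 : ℝ) ^ i) ^ y = ((2 : ℝ) ^ y) ^ i := fun y => by
      rw [← Real.rpow_natCast, ← Real.rpow_mul (by norm_num), mul_comm _ y,
        Real.rpow_mul (by norm_num), Real.rpow_natCast]
    rw [pow_succ', Real.mul_rpow (by norm_num) (by positivity), e, e,
      Real.rpow_sub (by norm_num), div_pow]
    field_simp
  refine (measure_mono hsub).trans ((measure_biUnion_finset_le _ _).trans ?_)
  rw [Finset.mul_sum, ENNReal.ofReal_sum_of_nonneg fun i _ => by positivity]
  refine Finset.sum_le_sum fun i _ => ?_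
  rw [← hterm]
  exact h.measure_block_le _ (by positivity)

/-- A dyadic geometric sum, normalised by `n ^ (γ - 1)`, is controlled by the rate condition. -/
theorem exists_geom_sum_le (γ r : ℝ) :
    ∃ A : ℝ, 0 ≤ A ∧ ∀ n : ℕ, 1 ≤ n →
      (n : ℝ) ^ (γ - 1) * ∑ i ∈ Finset.range (Nat.log 2 n + 1), ((2 : ℝ) ^ (1 - r / 2 - γ)) ^ i
        ≤ A * ((n : ℝ) ^ (-r / 2) * (1 + Real.log n * (if γ - 1 + r / 2 = 0 then (1 : ℝ) else 0))
          + (n : ℝ) ^ (γ - 1)) := by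
  have hlog : ∀ n : ℕ, 1 ≤ n → (2 : ℝ) ^ Nat.log 2 n ≤ n := fun n hn => by
    exact_mod_cast Nat.pow_log_le_self 2 (by omega)
  set δ := 1 - r / 2 - γ with hδ
  set q : ℝ := 2 ^ δ with hq
  have hq0 : 0 < q := by positivity
  rcases lt_trichotomy δ 0 with h | h | h
  · have hq1 : q < 1 := Real.rpow_lt_one_of_one_lt_of_neg (by norm_num) h
    refine ⟨(1 - q)⁻¹, inv_nonneg.2 (by linarith), fun n hn => ?_⟩
    have hn0 : (0 : ℝ) < n := by exact_mod_cast hn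
    rw [if_neg (by linarith), mul_zero, add_zero, mul_one, mul_comm]
    have h1 : ∑ i ∈ Finset.range (Nat.log 2 n + 1), q ^ i ≤ (1 - q)⁻¹ := by
      rw [← tsum_geometric_of_lt_one hq0.le hq1]
      exact (summable_geometric_of_lt_one hq0.le hq1).sum_le_tsum _ fun i _ => by positivity
    refine mul_le_mul h1 ?_ (by positivity) (inv_nonneg.2 (by linarith))
    have : (0 : ℝ) < (n : ℝ) ^ (-r / 2) := by positivity
    linarith
  · refine ⟨2, by norm_num, fun n hn => ?_⟩
    have hn0 : (0 : ℝ) < n := by exact_mod_cast hn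
    have hq1 : q = 1 := by rw [hq, h, Real.rpow_zero]
    rw [if_pos (by linarith), hq1, mul_one, show γ - 1 = -r / 2 by linarith]
    simp only [one_pow, Finset.sum_const, Finset.card_range, nsmul_eq_mul, mul_one]
    have h1 : (Nat.log 2 n : ℝ) * Real.log 2 ≤ Real.log n := by
      rw [← Real.log_pow]
      exact Real.log_le_log (by positivity) (hlog n hn)
    have h2 : (1 : ℝ) / 2 ≤ Real.log 2 := by linarith [Real.log_two_gt_d9]
    have h3 : (Nat.log 2 n : ℝ) * (1 / 2) ≤ Nat.log 2 n * Real.log 2 := by gcongr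
    have h4 : (0 : ℝ) < (n : ℝ) ^ (-r / 2) := by positivity
    have h5 : ((Nat.log 2 n + 1 : ℕ) : ℝ) ≤ 2 * (1 + Real.log n) := by push_cast; linarith
    have h6 := mul_le_mul_of_nonneg_left h5 h4.le
    linarith
  · have hq1 : 1 < q := Real.one_lt_rpow (by norm_num) h
    have hA : 0 ≤ q / (q - 1) := div_nonneg hq0.le (by linarith)
    refine ⟨q / (q - 1), hA, fun n hn => ?_⟩
    have hn0 : (0 : ℝ) < n := by exact_mod_cast hn
    rw [if_neg (by linarith), mul_zero, add_zero, mul_one]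
    have h1 : q ^ Nat.log 2 n ≤ (n : ℝ) ^ δ := by
      rw [hq, ← Real.rpow_natCast, ← Real.rpow_mul (by norm_num), mul_comm,
        Real.rpow_mul (by norm_num), Real.rpow_natCast]
      exact Real.rpow_le_rpow (by positivity) (hlog n hn) h.le
    have h2 : ∑ i ∈ Finset.range (Nat.log 2 n + 1), q ^ i ≤ q / (q - 1) * (n : ℝ) ^ δ := by
      rw [geom_sum_eq hq1.ne', pow_succ', div_mul_eq_mul_div]
      refine div_le_div_of_nonneg_right ?_ (by linarith)
      have := mul_le_mul_of_nonneg_left h1 hq0.le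
      linarith
    have h3 : (n : ℝ) ^ (γ - 1) * (n : ℝ) ^ δ = (n : ℝ) ^ (-r / 2) := by
      rw [← Real.rpow_add hn0]; congr 1; rw [hδ]; ring
    calc (n : ℝ) ^ (γ - 1) * ∑ i ∈ Finset.range (Nat.log 2 n + 1), q ^ i
        ≤ (n : ℝ) ^ (γ - 1) * (q / (q - 1) * (n : ℝ) ^ δ) := by gcongr
      _ = q / (q - 1) * (n : ℝ) ^ (-r / 2) := by rw [← h3]; ring
      _ ≤ _ := by
        refine mul_le_mul_of_nonneg_left ?_ hA
        have : (0 : ℝ) < (n : ℝ) ^ (γ - 1) := by positivity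
        linarith

end TailBounds

section Deterministic

variable {V : Type*} [AddCommGroup V] [Module ℝ V]

/-- The weighted two-sample difference at the split `x` of a sample of size `n`, in terms of
the partial sum `h` up to `x` and the total sum `H`. -/
noncomputable def splitDiff (γ n x : ℝ) (h H : V) : V :=
  ((x / n) * (1 - x / n)) ^ (1 - γ) • (x⁻¹ • h - (n - x)⁻¹ • (H - h))

theorem splitDiff_eq {γ n x : ℝ} (hx : 0 < x) (hxn : x < n) (h H : V) :
    splitDiff γ n x h H
      = (((x / n) * (1 - x / n)) ^ (-γ) / n) • (h - (x / n) • H) := by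
  have hn : 0 < n := hx.trans hxn
  have hnx : 0 < n - x := sub_pos.2 hxn
  have hp : 0 < (x / n) * (1 - x / n) := by
    have : 0 < 1 - x / n := by rw [sub_pos, div_lt_one hn]; exact hxn
    positivity
  have e : ((x / n) * (1 - x / n)) ^ (1 - γ)
      = ((x / n) * (1 - x / n)) ^ (-γ) * ((x / n) * (1 - x / n)) := by
    rw [← Real.rpow_add_one hp.ne']
    congr 1
    ring
  rw [splitDiff, e]
  have e1 : ((x / n) * (1 - x / n)) * (x⁻¹ + (n - x)⁻¹) = 1 / n := by field_simp; ring
  have e2 : ((x / n) * (1 - x / n)) * (n - x)⁻¹ = 1 / n * (x / n) := by field_simp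
  set v := ((x / n) * (1 - x / n)) ^ (-γ)
  calc (v * ((x / n) * (1 - x / n))) • (x⁻¹ • h - (n - x)⁻¹ • (H - h))
      = v • ((((x / n) * (1 - x / n)) * (x⁻¹ + (n - x)⁻¹)) • h
        - (((x / n) * (1 - x / n)) * (n - x)⁻¹) • H) := by module
    _ = _ := by rw [e1, e2]; module

theorem splitDiff_reflect {γ n x : ℝ} (hn : n ≠ 0) (h H : V) :
    splitDiff γ n (n - x) (H - h) H = -splitDiff γ n x h H := by
  have e : ((n - x) / n) * (1 - (n - x) / n) = (x / n) * (1 - x / n) := by field_simp; ring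
  rw [splitDiff, splitDiff, e, sub_sub_cancel, sub_sub_cancel]
  module

variable {N : V → ℝ}

theorem seminorm_neg' (hN_smul : ∀ (a : ℝ) (v : V), N (a • v) = |a| * N v) (v : V) :
    N (-v) = N v := by
  have := hN_smul (-1) v
  simpa using this

theorem seminorm_sub_le (hN_smul : ∀ (a : ℝ) (v : V), N (a • v) = |a| * N v)
    (hN_add : ∀ v w : V, N (v + w) ≤ N v + N w) (v w : V) :
    N (v - w) ≤ N v + N w := by
  rw [sub_eq_add_neg, ← seminorm_neg' hN_smul w]
  exact hN_add _ _

/-- The weighted difference at the true change point `t` is bounded below. -/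
theorem le_splitDiff (hN_smul : ∀ (a : ℝ) (v : V), N (a • v) = |a| * N v)
    (hN_add : ∀ v w : V, N (v + w) ≤ N v + N w)
    {γ n t b c c₁ : ℝ} (hγ0 : 0 ≤ γ) (hn : 0 < n)
    (hc0 : 0 < c) (hc : c ≤ t / n) (hc' : t / n ≤ 1 - c) (hc₁ : 2 * c₁ ≤ c ^ 2 / 2)
    {P Q St Sn : V} (hb0 : 0 < b) (hb : b ≤ N (P - Q)) (h1 : N St ≤ c₁ * b * n)
    (h2 : N (Sn - St) ≤ c₁ * b * n) :
    c ^ 2 / 2 * b ≤ N (splitDiff γ n t (St + t • P) (Sn + (t • P + (n - t) • Q))) := by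
  have hu : 0 < t / n := hc0.trans_le hc
  have ht : 0 < t := by
    by_contra! h
    exact absurd hu (not_lt.2 (div_nonpos_of_nonpos_of_nonneg h hn.le))
  have htn : t < n := by
    rw [← div_lt_one hn]; linarith
  rw [splitDiff_eq ht htn]
  set u := t / n with hudef
  have htu : t = u * n := by rw [hudef]; field_simp
  have hv : 1 ≤ (u * (1 - u)) ^ (-γ) :=
    Real.one_le_rpow_of_pos_of_le_one_of_nonpos (by nlinarith) (by nlinarith) (by linarith)
  have e : St + t • P - u • (Sn + (t • P + (n - t) • Q))
      = (n * (u * (1 - u))) • (P - Q) - (u • (Sn - St) - (1 - u) • St) := by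
    rw [htu]
    module
  have h3 : N ((n * (u * (1 - u))) • (P - Q))
      ≤ N (St + t • P - u • (Sn + (t • P + (n - t) • Q)))
        + N (u • (Sn - St) - (1 - u) • St) := by
    rw [e]
    refine le_of_eq_of_le ?_ (hN_add _ _)
    rw [sub_add_cancel]
  have h4 : N (u • (Sn - St) - (1 - u) • St) ≤ u * (c₁ * b * n) + (1 - u) * (c₁ * b * n) := by
    refine (seminorm_sub_le hN_smul hN_add _ _).trans ?_
    rw [hN_smul, hN_smul, abs_of_pos hu, abs_of_nonneg (by linarith)]
    exact add_le_add (mul_le_mul_of_nonneg_left h2 hu.le)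
      (mul_le_mul_of_nonneg_left h1 (by linarith))
  have huu : c ^ 2 ≤ u * (1 - u) := by nlinarith
  rw [hN_smul, abs_of_nonneg (by nlinarith [mul_nonneg hn.le (sq_nonneg c)])] at h3
  have hu1 : 0 < 1 - u := by linarith
  have h5 : n * c ^ 2 * b ≤ n * (u * (1 - u)) * N (P - Q) :=
    mul_le_mul (mul_le_mul_of_nonneg_left huu hn.le) hb hb0.le (by positivity)
  have h6 : n * (c ^ 2 / 2 * b) ≤ N (St + t • P - u • (Sn + (t • P + (n - t) • Q))) := by
    have : c₁ * b * n ≤ c ^ 2 / 4 * b * n := by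
      have : c₁ ≤ c ^ 2 / 4 := by linarith
      gcongr
    have : 0 < n * c ^ 2 * b := by positivity
    linarith
  rw [hN_smul, abs_of_nonneg (by positivity)]
  calc c ^ 2 / 2 * b = 1 / n * (n * (c ^ 2 / 2 * b)) := by field_simp
    _ ≤ _ := mul_le_mul (by gcongr) h6 (by positivity) (by positivity)

/-- If the weighted difference at `x < t` is at least the one at the change point `t`, then the
centred partial sum at `x` is far from the linear interpolation. -/
theorem mul_le_of_splitDiff_le (hN_smul : ∀ (a : ℝ) (v : V), N (a • v) = |a| * N v)
    (hN_add : ∀ v w : V, N (v + w) ≤ N v + N w)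
    {γ n x t a : ℝ} (hγ0 : 0 ≤ γ) (hγ1 : γ < 1) (hx : 0 < x)
    (hxt : x < t) (htn : t < n) {P Sx St Hn : V} (ha0 : 0 ≤ a)
    (ha : a ≤ N (splitDiff γ n t (St + t • P) Hn))
    (h : N (splitDiff γ n t (St + t • P) Hn) ≤ N (splitDiff γ n x (Sx + x • P) Hn)) :
    (1 - γ) * (1 - x / t) * a
      ≤ ((x / n) * (1 - x / n)) ^ (-γ) / n * N (Sx - (x / t) • St) := by
  have hg : 0 < 1 - γ := by linarith
  have ht : 0 < t := hx.trans hxt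
  have hxn : x < n := hxt.trans htn
  have hn : 0 < n := hx.trans hxn
  set A := splitDiff γ n t (St + t • P) Hn with hA
  set u := x / n with hu
  set p := t / n with hp
  set s := x / t with hs
  have hu0 : 0 < u := div_pos hx hn
  have hp0 : 0 < p := div_pos ht hn
  have hs0 : 0 < s := div_pos hx ht
  have hup : u < p := by rw [hu, hp]; gcongr
  have hs1 : s < 1 := (div_lt_one ht).2 hxt
  have husp : u = s * p := by rw [hu, hs, hp]; field_simp
  set v := (u * (1 - u)) ^ (-γ) with hv
  set vt := (p * (1 - p)) ^ (-γ) with hvt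
  have hp1 : 0 < 1 - p := by rw [sub_pos, hp, div_lt_one hn]; exact htn
  have hu1 : 0 < 1 - u := by linarith
  have hv0 : 0 < v := Real.rpow_pos_of_pos (by positivity) _
  have hvt0 : 0 < vt := Real.rpow_pos_of_pos (by positivity) _
  have hlam : v / vt * s ≤ 1 - (1 - γ) * (1 - s) := by
    have e1 : v / vt = s ^ (-γ) * ((1 - u) / (1 - p)) ^ (-γ) := by
      rw [hv, hvt, ← Real.div_rpow (by positivity) (by positivity),
        ← Real.mul_rpow (by positivity) (by positivity), husp]
      congr 1
      field_simp
    have e2 : ((1 - u) / (1 - p)) ^ (-γ) ≤ 1 :=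
      Real.rpow_le_one_of_one_le_of_nonpos (by rw [le_div_iff₀ hp1]; linarith) (by linarith)
    have e3 : s ^ (-γ) * s = s ^ (1 - γ) := by
      rw [← Real.rpow_add_one hs0.ne']; congr 1; ring
    have e4 : s ^ (1 - γ) ≤ 1 - (1 - γ) * (1 - s) := by
      have := rpow_one_add_le_one_add_mul_self (s := s - 1) (p := 1 - γ) (by linarith)
        (by linarith) (by linarith)
      rw [add_sub_cancel] at this
      linarith
    calc v / vt * s = s ^ (1 - γ) * ((1 - u) / (1 - p)) ^ (-γ) := by rw [e1, ← e3]; ring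
      _ ≤ s ^ (1 - γ) * 1 := by gcongr
      _ ≤ _ := by linarith
  have hdec : splitDiff γ n x (Sx + x • P) Hn = (v / vt * s) • A + (v / n) • (Sx - s • St) := by
    rw [hA, splitDiff_eq hx hxn, splitDiff_eq ht htn, ← hv, ← hvt, ← hu, ← hp]
    have e1 : x = s * t := by rw [hs]; field_simp
    have e2 : v / vt * s * (vt / n) = v / n * s := by field_simp
    rw [smul_smul, e2, husp, e1]
    module
  have h4 := hN_add ((v / vt * s) • A) ((v / n) • (Sx - s • St))
  rw [← hdec, hN_smul, hN_smul, abs_of_pos (by positivity), abs_of_pos (by positivity)] at h4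
  have h6 := mul_le_mul_of_nonneg_right hlam (ha0.trans ha)
  have h7 : (1 - γ) * (1 - s) * a ≤ (1 - γ) * (1 - s) * N A := by
    have : 0 < 1 - s := by linarith
    gcongr
  linarith

/-- If the weighted difference at `x < t` is at least the one at the change point `t`, then the
centred sums fluctuate a lot, either between `x` and `t` or up to `x`. -/
theorem splitDiff_dichotomy (hN_smul : ∀ (a : ℝ) (v : V), N (a • v) = |a| * N v)
    (hN_add : ∀ v w : V, N (v + w) ≤ N v + N w)
    {γ n x t b c : ℝ} (hγ0 : 0 ≤ γ) (hγ1 : γ < 1) (hx : 0 < x)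
    (hxt : x < t) (hn : 0 < n) (hc0 : 0 < c) (hc : c ≤ t / n) (hc' : t / n ≤ 1 - c)
    {P Q Sx St Sn : V} (hb0 : 0 < b) (hb : b ≤ N (P - Q))
    (h1 : N St ≤ (1 - γ) * c ^ 4 / 8 * b * n) (h2 : N (Sn - St) ≤ (1 - γ) * c ^ 4 / 8 * b * n)
    (h3 : N (splitDiff γ n t (St + t • P) (Sn + (t • P + (n - t) • Q)))
      ≤ N (splitDiff γ n x (Sx + x • P) (Sn + (t • P + (n - t) • Q)))) :
    (1 - γ) * c ^ 4 / 8 * b * (t - x) ≤ N (St - Sx) ∨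
      (1 - γ) * c ^ 4 / 8 * b * n ^ (1 - γ) * x ^ γ ≤ N Sx := by
  have hg : 0 < 1 - γ := by linarith
  have hc1 : c ≤ 1 / 2 := by linarith
  have hc2 : c ^ 2 ≤ 1 := by nlinarith
  have ht : 0 < t := hx.trans hxt
  have htn : t < n := by rw [← div_lt_one hn]; linarith
  have hxn : x < n := hxt.trans htn
  have hlow := le_splitDiff hN_smul hN_add (γ := γ) hγ0 hn hc0 hc hc'
    (c₁ := (1 - γ) * c ^ 4 / 8) (by
      have : (1 - γ) * c ^ 4 ≤ 1 * c ^ 2 := by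
        have : c ^ 4 ≤ c ^ 2 := by nlinarith [sq_nonneg c]
        exact mul_le_mul (by linarith) this (by positivity) (by norm_num)
      nlinarith [sq_nonneg c]) hb0 hb h1 h2
  have hkey := mul_le_of_splitDiff_le hN_smul hN_add hγ0 hγ1 hx hxt htn
    (show 0 ≤ c ^ 2 / 2 * b by positivity) hlow h3
  clear h3 hlow h2 hb
  set u := x / n with hu
  set p := t / n with hp
  set s := x / t with hs
  have hu0 : 0 < u := div_pos hx hn
  have hp0 : 0 < p := div_pos ht hn
  have hs0 : 0 < s := div_pos hx ht
  have hup : u < p := by rw [hu, hp]; gcongr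
  have hs1 : s < 1 := (div_lt_one ht).2 hxt
  have husp : u = s * p := by rw [hu, hs, hp]; field_simp
  set v := (u * (1 - u)) ^ (-γ) with hv
  have hu1 : 0 < 1 - u := by linarith
  have hv0 : 0 < v := Real.rpow_pos_of_pos (by positivity) _
  set c₁ := (1 - γ) * c ^ 4 / 8 with hc₁
  have hc₁0 : 0 < c₁ := by positivity
  rcases le_or_gt (1 / 2) s with hs2 | hs2
  · left
    have hvle : v ≤ 2 / c ^ 2 := by
      have h8 : c ^ 2 / 2 ≤ u * (1 - u) := by
        rw [husp]
        have : 1 / 2 * c ≤ s * p := mul_le_mul hs2 hc hc0.le hs0.le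
        have : c ≤ 1 - s * p := by rw [← husp]; linarith
        nlinarith
      calc v ≤ (c ^ 2 / 2) ^ (-γ) := Real.rpow_le_rpow_of_nonpos (by positivity) h8 (by linarith)
        _ ≤ (c ^ 2 / 2) ^ (-1 : ℝ) := Real.rpow_le_rpow_of_exponent_ge (by positivity)
            (by linarith) (by linarith)
        _ = 2 / c ^ 2 := by rw [Real.rpow_neg_one, inv_div]
    have hsplit : N (Sx - s • St) ≤ N (St - Sx) + (1 - s) * (c₁ * b * n) := by
      have : Sx - s • St = (-(St - Sx)) + (1 - s) • St := by module
      rw [this]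
      refine (hN_add _ _).trans ?_
      rw [seminorm_neg' hN_smul, hN_smul, abs_of_pos (by linarith)]
      have := mul_le_mul_of_nonneg_left h1 (show 0 ≤ 1 - s by linarith)
      linarith
    have hNn : 0 ≤ N (Sx - s • St) := by
      have h9 : 0 < 1 - s := by linarith
      by_contra! h
      have : 0 < (1 - γ) * (1 - s) * (c ^ 2 / 2 * b) := by positivity
      have := mul_neg_of_pos_of_neg (show 0 < v / n by positivity) h
      linarith
    have h8 : (1 - γ) * (1 - s) * (c ^ 2 / 2 * b) ≤ 2 / c ^ 2 / n * N (Sx - s • St) :=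
      hkey.trans (by gcongr)
    have h9 : (1 - γ) * (1 - s) * (c ^ 2 / 2 * b) * (n * c ^ 2 / 2) ≤ N (Sx - s • St) := by
      have := mul_le_mul_of_nonneg_right h8 (show 0 ≤ n * c ^ 2 / 2 by positivity)
      refine this.trans_eq ?_
      field_simp
    have h10 : c₁ * b * (1 - s) * n ≤ N (St - Sx) := by
      have : (1 - γ) * (1 - s) * (c ^ 2 / 2 * b) * (n * c ^ 2 / 2)
          = 2 * (c₁ * b * (1 - s) * n) := by rw [hc₁]; ring
      linarith
    have h11 : t - x ≤ (1 - s) * n := by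
      have : t - x = (1 - s) * t := by rw [hs]; field_simp
      rw [this]
      exact mul_le_mul_of_nonneg_left htn.le (by linarith)
    have := mul_le_mul_of_nonneg_left h11 (show 0 ≤ c₁ * b by positivity)
    linarith
  · right
    have hsplit : N (Sx - s • St) ≤ N Sx + s * (c₁ * b * n) := by
      refine (seminorm_sub_le hN_smul hN_add _ _).trans ?_
      rw [hN_smul, abs_of_pos hs0]
      have := mul_le_mul_of_nonneg_left h1 hs0.le
      linarith
    have hug : 0 < u ^ γ := Real.rpow_pos_of_pos hu0 _
    have hvle : v ≤ 1 / (u ^ γ * c) := by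
      have e1 : (1 - u) ^ (-γ) ≤ c ^ (-1 : ℝ) :=
        (Real.rpow_le_rpow_of_exponent_ge hu1 (by linarith) (by linarith)).trans
          (Real.rpow_le_rpow_of_nonpos hc0 (by linarith) (by norm_num))
      rw [hv, Real.mul_rpow hu0.le hu1.le, Real.rpow_neg hu0.le, one_div, mul_inv]
      rw [Real.rpow_neg_one] at e1
      gcongr
    have hsle : s ≤ u ^ γ / c := by
      rw [le_div_iff₀ hc0]
      calc s * c ≤ s * p := by gcongr
        _ = u ^ (1 : ℝ) := by rw [Real.rpow_one, husp]
        _ ≤ u ^ γ := Real.rpow_le_rpow_of_exponent_ge hu0 (by linarith) hγ1.le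
    have hNn : 0 ≤ N Sx + s * (c₁ * b * n) := by
      have h9 : 0 < 1 - s := by linarith
      by_contra! h
      have : 0 < (1 - γ) * (1 - s) * (c ^ 2 / 2 * b) := by positivity
      have := mul_neg_of_pos_of_neg (show 0 < v / n by positivity) (hsplit.trans_lt h)
      linarith
    have h8 : (1 - γ) * (1 / 2) * (c ^ 2 / 2 * b) ≤ 1 / (u ^ γ * c) / n
        * (N Sx + s * (c₁ * b * n)) := by
      calc (1 - γ) * (1 / 2) * (c ^ 2 / 2 * b) ≤ (1 - γ) * (1 - s) * (c ^ 2 / 2 * b) := by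
            have : 1 / 2 ≤ 1 - s := by linarith
            gcongr
        _ ≤ v / n * N (Sx - s • St) := hkey
        _ ≤ v / n * (N Sx + s * (c₁ * b * n)) := by gcongr
        _ ≤ _ := by gcongr
    have h9 : (1 - γ) * (1 / 2) * (c ^ 2 / 2 * b) * (u ^ γ * c * n)
        ≤ N Sx + s * (c₁ * b * n) := by
      have := mul_le_mul_of_nonneg_right h8 (show 0 ≤ u ^ γ * c * n by positivity)
      refine this.trans_eq ?_
      field_simp
    have h10 : s * (c₁ * b * n) ≤ (1 - γ) * c ^ 3 / 8 * b * n * u ^ γ := by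
      calc s * (c₁ * b * n) ≤ u ^ γ / c * (c₁ * b * n) := by gcongr
        _ = _ := by rw [hc₁]; field_simp
    have h11 : n ^ (1 - γ) * x ^ γ = n * u ^ γ := by
      rw [hu, Real.div_rpow hx.le hn.le, Real.rpow_sub hn, Real.rpow_one]
      field_simp
    have h12 : c₁ * b * n ^ (1 - γ) * x ^ γ ≤ (1 - γ) * c ^ 3 / 8 * b * n * u ^ γ := by
      have : c₁ * b * n ^ (1 - γ) * x ^ γ = c₁ * b * n * u ^ γ := by
        rw [mul_assoc, h11]; ring
      rw [this, hc₁]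
      have : c ^ 4 ≤ c ^ 3 := by
        have : 0 < c ^ 3 := by positivity
        nlinarith
      gcongr
    have h13 : (1 - γ) * (1 / 2) * (c ^ 2 / 2 * b) * (u ^ γ * c * n)
        = 2 * ((1 - γ) * c ^ 3 / 8 * b * n * u ^ γ) := by ring
    linarith

end Deterministic

section OneSided

theorem sum_range_reverse {M : Type*} [AddCommGroup M] (z : ℕ → M) {n j : ℕ} (hj : j ≤ n) :
    ∑ i ∈ Finset.range j, z (n - 1 - i)
      = ∑ i ∈ Finset.range n, z i - ∑ i ∈ Finset.range (n - j), z i := by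
  induction j with
  | zero => simp
  | succ j ih =>
    rw [Finset.sum_range_succ, ih (by omega), show n - j = n - (j + 1) + 1 by omega,
      Finset.sum_range_succ, show n - 1 - j = n - (j + 1) by omega]
    abel

variable {Ω E : Type*} [MeasurableSpace E]

/-- The unnormalised empirical measure of the first `k` observations. -/
noncomputable def empSum (U : ℕ → Ω → E) (ω : Ω) (k : ℕ) : SignedMeasure E :=
  ∑ i ∈ Finset.range k, (Measure.dirac (U i ω)).toSignedMeasure

theorem empSum_reverse (U : ℕ → Ω → E) (ω : Ω) {n j : ℕ} (hj : j ≤ n) :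
    empSum (fun i => U (n - 1 - i)) ω j = empSum U ω n - empSum U ω (n - j) :=
  sum_range_reverse (fun i => (Measure.dirac (U i ω)).toSignedMeasure) hj

variable [MeasurableSpace Ω] {ℙ : Measure Ω} [IsProbabilityMeasure ℙ]

theorem empDev_reverse (U : ℕ → Ω → E) (ω : Ω) {n j : ℕ} (hj : j ≤ n) :
    empDev ℙ (fun i => U (n - 1 - i)) ω j = empDev ℙ U ω n - empDev ℙ U ω (n - j) :=
  sum_range_reverse (fun i => (Measure.dirac (U i ω)).toSignedMeasure
    - (ℙ.map (U i)).toSignedMeasure) hj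

theorem empSum_eq {U : ℕ → Ω → E} {P : Measure E} [IsProbabilityMeasure P] {k : ℕ}
    (h : ∀ i < k, ℙ.map (U i) = P) (ω : Ω) :
    empSum U ω k = empDev ℙ U ω k + (k : ℝ) • P.toSignedMeasure := by
  induction k with
  | zero => simp [empSum, empDev]
  | succ k ih =>
    have h1 : (ℙ.map (U k)).toSignedMeasure = P.toSignedMeasure := by
      congr 1
      exact h k (by omega)
    have h2 := ih fun i hi => h i (by omega)
    rw [empSum, empDev] at h2 ⊢
    rw [Finset.sum_range_succ, Finset.sum_range_succ, h2, h1]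
    push_cast
    module

theorem empSum_eq_add {U : ℕ → Ω → E} {P Q : Measure E} [IsProbabilityMeasure P]
    [IsProbabilityMeasure Q] {τ n : ℕ} (hτ : τ ≤ n) (hP : ∀ i < τ, ℙ.map (U i) = P)
    (hQ : ∀ i < n, τ ≤ i → ℙ.map (U i) = Q) (ω : Ω) :
    empSum U ω n = empDev ℙ U ω n
      + ((τ : ℝ) • P.toSignedMeasure + ((n : ℝ) - τ) • Q.toSignedMeasure) := by
  have h1 := empSum_eq hP ω
  have h2 := empSum_eq (ℙ := ℙ) (U := fun i => U (n - 1 - i)) (P := Q) (k := n - τ)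
    (fun i hi => hQ _ (by omega) (by omega)) ω
  rw [empSum_reverse U ω (by omega), empDev_reverse U ω (by omega),
    show n - (n - τ) = τ by omega, h1, Nat.cast_sub hτ] at h2
  rw [sub_eq_iff_eq_add] at h2
  rw [h2]
  module

/-- The convergence rate of the maximal deviations over the whole sample. -/
noncomputable def devRate (γ r : ℝ) (n : ℕ) : ℝ :=
  (n : ℝ) ^ (-r / 2) * (1 + Real.log n * (if γ - 1 + r / 2 = 0 then (1 : ℝ) else 0))
    + (n : ℝ) ^ (γ - 1)

theorem rpow_le_devRate (γ r : ℝ) {n : ℕ} (hn : 1 ≤ n) : (n : ℝ) ^ (-r / 2) ≤ devRate γ r n := by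
  have hn' : (1 : ℝ) ≤ n := by exact_mod_cast hn
  have h1 : 0 ≤ Real.log n * (if γ - 1 + r / 2 = 0 then (1 : ℝ) else 0) :=
    mul_nonneg (Real.log_nonneg hn') (by split_ifs <;> norm_num)
  have h2 : (0 : ℝ) < (n : ℝ) ^ (-r / 2) := by positivity
  have h3 : (0 : ℝ) < (n : ℝ) ^ (γ - 1) := by positivity
  have h4 := mul_nonneg h2.le h1
  unfold devRate
  linarith

variable {G : Set (E → ℝ)} {φ : (E → ℝ) → ℝ} {r γ K : ℝ} {N : SignedMeasure E → ℝ}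

/-- The event that some split to the left of the change point, at distance more than `m`, beats
the change point has a small probability. -/
theorem exists_measure_left_le (hr0 : 0 < r) (hγ0 : 0 ≤ γ) (hγ1 : γ < 1) (hK : 0 ≤ K)
    (hN_smul : ∀ (a : ℝ) (ν : SignedMeasure E), N (a • ν) = |a| * N ν)
    (hN_add : ∀ ν₁ ν₂ : SignedMeasure E, N (ν₁ + ν₂) ≤ N ν₁ + N ν₂)
    (hmax : ∀ (J : ℕ) (Y : ℕ → Ω → E), HasDecay ℙ G φ r J Y →
      HasMax ℙ (fun ω j => N (empDev ℙ Y ω j)) J K (1 - r / 2)) {c : ℝ} (hc0 : 0 < c) :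
    ∃ A : ℝ, 0 ≤ A ∧ ∀ (n τ : ℕ) (U : ℕ → Ω → E) (P Q : Measure E) [IsProbabilityMeasure P]
      [IsProbabilityMeasure Q] (b m : ℝ), 0 < n → HasDecay ℙ G φ r n U →
      (∀ i < τ, ℙ.map (U i) = P) → (∀ i < n, τ ≤ i → ℙ.map (U i) = Q) →
      c ≤ (τ : ℝ) / n → (τ : ℝ) / n ≤ 1 - c → 0 < b → 0 < m →
      b ≤ N (P.toSignedMeasure - Q.toSignedMeasure) →
      ℙ {ω | ∃ k : ℕ, 0 < k ∧ k < τ ∧ m < (τ : ℝ) - k ∧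
        N (splitDiff γ n τ (empSum U ω τ) (empSum U ω n))
          ≤ N (splitDiff γ n k (empSum U ω k) (empSum U ω n))}
        ≤ ENNReal.ofReal (A * (b⁻¹ * m ^ (-r / 2) + b⁻¹ * devRate γ r n)) := by
  obtain ⟨A₀, hA₀, hgeom⟩ := exists_geom_sum_le γ r
  set c₁ := (1 - γ) * c ^ 4 / 8 with hc₁
  have hg : 0 < 1 - γ := by linarith
  have hc₁0 : 0 < c₁ := by positivity
  have hq1 : (2 : ℝ) ^ ((1 - r / 2) - 1) < 1 :=
    Real.rpow_lt_one_of_one_lt_of_neg (by norm_num) (by linarith)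
  set g : ℝ := 1 - 2 ^ ((1 - r / 2) - 1) with hgdef
  have hg0 : 0 < g := by linarith
  set B₁ := K / c₁ * 2 ^ (1 - r / 2) / g with hB₁
  set B₂ := K / c₁ * 2 ^ (1 - r / 2) * A₀ with hB₂
  have hB₁0 : 0 ≤ B₁ := by positivity
  have hB₂0 : 0 ≤ B₂ := by positivity
  refine ⟨B₁ + (B₂ + 2 * (K / c₁)), by positivity, fun n τ U P Q _ _ b m hn hU hP hQ hcl hcu hb hm
    hbN => ?_⟩
  have hn' : (0 : ℝ) < n := by exact_mod_cast hn
  have hτn : τ ≤ n := by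
    have : (τ : ℝ) ≤ n := by
      rw [← div_le_one hn']; linarith
    exact_mod_cast this
  set E₁ := {ω | ∃ j ≤ τ, m < (j : ℝ) ∧ c₁ * b * j ≤ N (empDev ℙ (fun i => U (τ - 1 - i)) ω j)}
  set E₂ := {ω | ∃ j ≤ τ, 1 ≤ j ∧ c₁ * b * (n : ℝ) ^ (1 - γ) * (j : ℝ) ^ γ ≤ N (empDev ℙ U ω j)}
  set E₃ := {ω | ∃ j ≤ n, (j : ℝ) ≤ n ∧ c₁ * b * n ≤ N (empDev ℙ U ω j)}
  set E₄ := {ω | ∃ j ≤ n, (j : ℝ) ≤ n ∧ c₁ * b * n ≤ N (empDev ℙ (fun i => U (n - 1 - i)) ω j)}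
  have hsub : {ω | ∃ k : ℕ, 0 < k ∧ k < τ ∧ m < (τ : ℝ) - k ∧
        N (splitDiff γ n τ (empSum U ω τ) (empSum U ω n))
          ≤ N (splitDiff γ n k (empSum U ω k) (empSum U ω n))} ⊆ (E₁ ∪ E₂) ∪ (E₃ ∪ E₄) := by
    rintro ω ⟨k, hk0, hkτ, hkm, hle⟩
    by_contra hcon
    simp only [Set.mem_union, not_or] at hcon
    obtain ⟨⟨h1, h2⟩, h3, h4⟩ := hcon
    have h3' : N (empDev ℙ U ω τ) ≤ c₁ * b * n := by
      by_contra! h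
      exact h3 ⟨τ, hτn, by exact_mod_cast hτn, h.le⟩
    have h4' : N (empDev ℙ U ω n - empDev ℙ U ω τ) ≤ c₁ * b * n := by
      by_contra! h
      refine h4 ⟨n - τ, by omega, by exact_mod_cast Nat.sub_le n τ, ?_⟩
      rw [empDev_reverse U ω (by omega), show n - (n - τ) = τ by omega]
      exact h.le
    rw [empSum_eq hP ω, empSum_eq (fun i hi => hP i (hi.trans hkτ)) ω,
      empSum_eq_add hτn hP hQ ω] at hle
    rcases splitDiff_dichotomy hN_smul hN_add hγ0 hγ1 (by exact_mod_cast hk0)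
      (by exact_mod_cast hkτ) hn' hc0 hcl hcu hb hbN h3' h4' hle with h | h
    · refine h1 ⟨τ - k, by omega, by rwa [Nat.cast_sub hkτ.le], ?_⟩
      rw [empDev_reverse U ω (by omega), show τ - (τ - k) = k by omega, Nat.cast_sub hkτ.le]
      exact h
    · exact h2 ⟨k, hkτ.le, hk0, h⟩
  have hm₁ : ℙ E₁ ≤ ENNReal.ofReal (B₁ * (b⁻¹ * m ^ (-r / 2))) := by
    refine ((hmax τ _ (hU.mono hτn).reverse).measure_linear_le hK (by linarith)
      (show 0 < c₁ * b by positivity) hm).trans_eq ?_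
    rw [← hgdef, show 1 - r / 2 - 1 = -r / 2 by ring, hB₁]
    congr 1
    field_simp
  have hm₂ : ℙ E₂ ≤ ENNReal.ofReal (B₂ * (b⁻¹ * devRate γ r n)) := by
    refine ((hmax τ _ (hU.mono hτn)).measure_power_le hK hγ0 hτn
      (show 0 < c₁ * b * (n : ℝ) ^ (1 - γ) by positivity)).trans (ENNReal.ofReal_le_ofReal ?_)
    have h1 := hgeom n hn
    have h2 : ((n : ℝ) ^ (1 - γ))⁻¹ = (n : ℝ) ^ (γ - 1) := by
      rw [← Real.rpow_neg hn'.le]; congr 1; ring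
    calc K / (c₁ * b * (n : ℝ) ^ (1 - γ)) * 2 ^ (1 - r / 2)
          * ∑ i ∈ Finset.range (Nat.log 2 n + 1), ((2 : ℝ) ^ (1 - r / 2 - γ)) ^ i
        = K / c₁ * 2 ^ (1 - r / 2) * b⁻¹ * ((n : ℝ) ^ (γ - 1)
          * ∑ i ∈ Finset.range (Nat.log 2 n + 1), ((2 : ℝ) ^ (1 - r / 2 - γ)) ^ i) := by
          rw [← h2]; field_simp
      _ ≤ K / c₁ * 2 ^ (1 - r / 2) * b⁻¹ * (A₀ * devRate γ r n) := by
          refine mul_le_mul_of_nonneg_left h1 (by positivity)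
      _ = _ := by rw [hB₂]; ring
  have hend : K * (n : ℝ) ^ (1 - r / 2) / (c₁ * b * n) ≤ K / c₁ * (b⁻¹ * devRate γ r n) := by
    have h1 : (n : ℝ) ^ (1 - r / 2) = (n : ℝ) ^ (-r / 2) * n := by
      rw [← Real.rpow_add_one hn'.ne']; congr 1; ring
    calc K * (n : ℝ) ^ (1 - r / 2) / (c₁ * b * n) = K / c₁ * (b⁻¹ * (n : ℝ) ^ (-r / 2)) := by
          rw [h1]; field_simp
      _ ≤ _ := by
          have := rpow_le_devRate γ r hn
          gcongr
  have hm₃ : ℙ E₃ ≤ ENNReal.ofReal (K / c₁ * (b⁻¹ * devRate γ r n)) :=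
    ((hmax n _ hU).measure_block_le n (by positivity)).trans (ENNReal.ofReal_le_ofReal hend)
  have hm₄ : ℙ E₄ ≤ ENNReal.ofReal (K / c₁ * (b⁻¹ * devRate γ r n)) :=
    ((hmax n _ hU.reverse).measure_block_le n (by positivity)).trans
      (ENNReal.ofReal_le_ofReal hend)
  have hrate : 0 ≤ b⁻¹ * devRate γ r n :=
    mul_nonneg (by positivity) (le_trans (by positivity) (rpow_le_devRate γ r hn))
  have hm0 : 0 ≤ b⁻¹ * m ^ (-r / 2) := by positivity
  have hKc : 0 ≤ K / c₁ := by positivity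
  refine (measure_mono hsub).trans <| (measure_union_le _ _).trans <|
    (add_le_add ((measure_union_le _ _).trans (add_le_add hm₁ hm₂))
      ((measure_union_le _ _).trans (add_le_add hm₃ hm₄))).trans ?_
  rw [← ENNReal.ofReal_add (by positivity) (by positivity),
    ← ENNReal.ofReal_add (by positivity) (by positivity),
    ← ENNReal.ofReal_add (by positivity) (by positivity)]
  refine ENNReal.ofReal_le_ofReal ?_
  have := mul_nonneg hB₁0 hrate
  have := mul_nonneg (add_nonneg hB₂0 (mul_nonneg zero_le_two hKc)) hm0
  linarith

/-- The event that some split at distance more than `m` of the change point beats the change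
point has a small probability. -/
theorem exists_measure_far_le (hr0 : 0 < r) (hγ0 : 0 ≤ γ) (hγ1 : γ < 1) (hK : 0 ≤ K)
    (hN_smul : ∀ (a : ℝ) (ν : SignedMeasure E), N (a • ν) = |a| * N ν)
    (hN_add : ∀ ν₁ ν₂ : SignedMeasure E, N (ν₁ + ν₂) ≤ N ν₁ + N ν₂)
    (hmax : ∀ (J : ℕ) (Y : ℕ → Ω → E), HasDecay ℙ G φ r J Y →
      HasMax ℙ (fun ω j => N (empDev ℙ Y ω j)) J K (1 - r / 2)) {c : ℝ} (hc0 : 0 < c) :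
    ∃ A : ℝ, 0 ≤ A ∧ ∀ (n τ : ℕ) (U : ℕ → Ω → E) (P Q : Measure E) [IsProbabilityMeasure P]
      [IsProbabilityMeasure Q] (b m : ℝ), 0 < n → HasDecay ℙ G φ r n U →
      (∀ i < τ, ℙ.map (U i) = P) → (∀ i < n, τ ≤ i → ℙ.map (U i) = Q) →
      c ≤ (τ : ℝ) / n → (τ : ℝ) / n ≤ 1 - c → 0 < b → 0 < m →
      b ≤ N (P.toSignedMeasure - Q.toSignedMeasure) →
      ℙ {ω | ∃ k : ℕ, 0 < k ∧ k < n ∧ m < |(τ : ℝ) - k| ∧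
        N (splitDiff γ n τ (empSum U ω τ) (empSum U ω n))
          ≤ N (splitDiff γ n k (empSum U ω k) (empSum U ω n))}
        ≤ ENNReal.ofReal (A * (b⁻¹ * m ^ (-r / 2) + b⁻¹ * devRate γ r n)) := by
  obtain ⟨A, hA, hleft⟩ := exists_measure_left_le hr0 hγ0 hγ1 hK hN_smul hN_add hmax hc0
  refine ⟨2 * A, by positivity, fun n τ U P Q _ _ b m hn hU hP hQ hcl hcu hb hm hbN => ?_⟩
  have hn' : (0 : ℝ) < n := by exact_mod_cast hn
  have hτn : τ ≤ n := by
    have : (τ : ℝ) ≤ n := by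
      rw [← div_le_one hn']; linarith
    exact_mod_cast this
  have hτn' : (((n - τ : ℕ) : ℝ)) / n = 1 - (τ : ℝ) / n := by
    rw [Nat.cast_sub hτn, sub_div, div_self hn'.ne']
  have h1 := hleft n τ U P Q b m hn hU hP hQ hcl hcu hb hm hbN
  have h2 := hleft n (n - τ) (fun i => U (n - 1 - i)) Q P b m hn hU.reverse
    (fun i hi => hQ _ (by omega) (by omega)) (fun i hi hi' => hP _ (by omega))
    (by rw [hτn']; linarith) (by rw [hτn']; linarith) hb hm
    (by rw [← neg_sub, seminorm_neg' (N := N) hN_smul]; exact hbN)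
  have hrefl : ∀ ω, ∀ k ≤ n, N (splitDiff γ n ((n - k : ℕ) : ℝ)
      (empSum (fun i => U (n - 1 - i)) ω (n - k)) (empSum (fun i => U (n - 1 - i)) ω n))
      = N (splitDiff γ n k (empSum U ω k) (empSum U ω n)) := by
    intro ω k hk
    rw [empSum_reverse U ω (by omega), empSum_reverse U ω le_rfl, Nat.sub_self,
      show n - (n - k) = k by omega, Nat.cast_sub hk, show empSum U ω 0 = 0 by simp [empSum],
      sub_zero, splitDiff_reflect hn'.ne', seminorm_neg' (N := N) hN_smul]
  refine (measure_mono (t := _ ∪ _) ?_).trans ((measure_union_le _ _).trans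
    ((add_le_add h1 h2).trans_eq ?_))
  · rintro ω ⟨k, hk0, hkn, hkm, hle⟩
    rcases lt_or_ge k τ with h | h
    · left
      rw [abs_of_nonneg (sub_nonneg.2 (by exact_mod_cast h.le))] at hkm
      exact ⟨k, hk0, h, hkm, hle⟩
    · right
      rw [abs_of_nonpos (sub_nonpos.2 (by exact_mod_cast h))] at hkm
      have hne : k ≠ τ := by
        rintro rfl
        simp at hkm
        linarith
      refine ⟨n - k, by omega, by omega, ?_, ?_⟩
      · rw [Nat.cast_sub hτn, Nat.cast_sub hkn.le]
        linarith
      · rw [hrefl ω k hkn.le, hrefl ω τ hτn]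
        exact hle
  · have hrate : 0 ≤ b⁻¹ * devRate γ r n :=
      mul_nonneg (by positivity) (le_trans (by positivity) (rpow_le_devRate γ r hn))
    have hm0 : 0 ≤ b⁻¹ * m ^ (-r / 2) := by positivity
    rw [← ENNReal.ofReal_add (by positivity) (by positivity)]
    congr 1
    ring

end OneSided

section Assembly

theorem sum_Icc_succ_eq_sub {M : Type*} [AddCommGroup M] (z : ℕ → M) {k n : ℕ} (h : k ≤ n) :
    ∑ i ∈ Finset.Icc (k + 1) n, z i
      = ∑ i ∈ Finset.range n, z (i + 1) - ∑ i ∈ Finset.range k, z (i + 1) := by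
  induction n, h using Nat.le_induction with
  | base => simp
  | succ n hn ih =>
    rw [Finset.sum_Icc_succ_top (by omega), ih, Finset.sum_range_succ]
    abel

theorem variance'_le_integral_sq {Ω : Type*} [MeasurableSpace Ω] {ℙ : Measure Ω}
    [IsProbabilityMeasure ℙ] {Y : Ω → ℝ} (hY : Measurable Y) :
    variance' ℙ Y ≤ ∫ ω, Y ω ^ 2 ∂ℙ := by
  have h := ProbabilityTheory.variance_le_expectation_sq (μ := ℙ) hY.aestronglyMeasurable
  rw [ProbabilityTheory.variance_eq_integral hY.aemeasurable] at h
  simpa [variance', covar, sq] using h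

theorem abs_integral_le_of_sq {E : Type*} [MeasurableSpace E] {f : E → ℝ} (hb : IsBddFun f)
    (hm : Measurable f) (μ : Measure E) [IsProbabilityMeasure μ] {a : ℝ} (ha : 0 ≤ a)
    (h : ∫ x, f x ^ 2 ∂μ ≤ a ^ 2) : |∫ x, f x ∂μ| ≤ a := by
  obtain ⟨M, hM⟩ := hb
  have h1 : MemLp f 2 μ := MemLp.of_bound hm.aestronglyMeasurable M (ae_of_all _ hM)
  have h2 := ProbabilityTheory.variance_nonneg f μ
  rw [ProbabilityTheory.variance_eq_sub h1] at h2
  have h3 : ∫ x, (f ^ 2) x ∂μ = ∫ x, f x ^ 2 ∂μ := rfl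
  rw [h3] at h2
  exact abs_le_of_sq_le_sq (by linarith) ha

section Norm

variable {E : Type*} [MeasurableSpace E] {P Q : ℕ → Measure E} [∀ n, IsProbabilityMeasure (P n)]
  [∀ n, IsProbabilityMeasure (Q n)] {f : E → ℝ} {a : ℝ}

theorem integral_sq_add_le (hb : IsBddFun f)
    (ha : a = ⨆ n : ℕ, Real.sqrt ((∫ x, f x ^ 2 ∂(P n)) + ∫ x, f x ^ 2 ∂(Q n))) (n : ℕ) :
    (∫ x, f x ^ 2 ∂(P n)) + ∫ x, f x ^ 2 ∂(Q n) ≤ a ^ 2 := by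
  obtain ⟨M, hM⟩ := hb
  have hfint : ∀ (μ : Measure E) [IsProbabilityMeasure μ], ∫ x, f x ^ 2 ∂μ ≤ M ^ 2 := by
    intro μ _
    have h := norm_integral_le_of_norm_le_const (μ := μ) (f := fun x => f x ^ 2) (C := M ^ 2)
      (ae_of_all _ fun x => by
        rw [norm_pow, Real.norm_eq_abs]
        exact pow_le_pow_left₀ (abs_nonneg _) (hM x) 2)
    simp only [probReal_univ, mul_one] at h
    exact (Real.le_norm_self _).trans h
  have hbdd : BddAbove (Set.range fun n : ℕ =>
      Real.sqrt ((∫ x, f x ^ 2 ∂(P n)) + ∫ x, f x ^ 2 ∂(Q n))) := by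
    refine ⟨Real.sqrt (M ^ 2 + M ^ 2), ?_⟩
    rintro _ ⟨k, rfl⟩
    exact Real.sqrt_le_sqrt (add_le_add (hfint _) (hfint _))
  have h0 : 0 ≤ (∫ x, f x ^ 2 ∂(P n)) + ∫ x, f x ^ 2 ∂(Q n) :=
    add_nonneg (integral_nonneg fun _ => sq_nonneg _) (integral_nonneg fun _ => sq_nonneg _)
  rw [← Real.sqrt_le_left (by rw [ha]; exact Real.iSup_nonneg fun _ => Real.sqrt_nonneg _), ha]
  exact le_ciSup hbdd n

theorem integral_sq_left_le (hb : IsBddFun f)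
    (ha : a = ⨆ n : ℕ, Real.sqrt ((∫ x, f x ^ 2 ∂(P n)) + ∫ x, f x ^ 2 ∂(Q n))) (n : ℕ) :
    ∫ x, f x ^ 2 ∂(P n) ≤ a ^ 2 :=
  (le_add_of_nonneg_right (integral_nonneg fun _ => sq_nonneg _)).trans
    (integral_sq_add_le hb ha n)

theorem integral_sq_right_le (hb : IsBddFun f)
    (ha : a = ⨆ n : ℕ, Real.sqrt ((∫ x, f x ^ 2 ∂(P n)) + ∫ x, f x ^ 2 ∂(Q n))) (n : ℕ) :
    ∫ x, f x ^ 2 ∂(Q n) ≤ a ^ 2 :=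
  (le_add_of_nonneg_left (integral_nonneg fun _ => sq_nonneg _)).trans
    (integral_sq_add_le hb ha n)

end Norm

/-- The correlation bound yields covariance decay with any smaller exponent. -/
theorem hasDecay_of_corr {Ω : Type*} [MeasurableSpace Ω] {ℙ : Measure Ω} [IsProbabilityMeasure ℙ]
    {E : Type*} [MeasurableSpace E] {X : ℕ → Ω → E} (hX : ∀ i, Measurable (X i))
    {G : Set (E → ℝ)} (hGm : ∀ f ∈ G, Measurable f) {a : (E → ℝ) → ℝ} (ha : ∀ f ∈ G, 0 ≤ a f)
    {n : ℕ} (hsq : ∀ f ∈ G, ∀ i, 1 ≤ i → i ≤ n → ∫ x, f x ^ 2 ∂(ℙ.map (X i)) ≤ a f ^ 2)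
    {C ρ r : ℝ} (hC : 0 < C) (hr : r ≤ ρ)
    (hcorr : ∀ f ∈ G, ∀ i m : ℕ, 1 ≤ i → 1 ≤ m → i + m ≤ n →
      |covar ℙ (fun ω => f (X i ω)) (fun ω => f (X (i + m) ω))| ≤
        C * (m : ℝ) ^ (-ρ) * Real.sqrt (variance' ℙ fun ω => f (X i ω)) *
          Real.sqrt (variance' ℙ fun ω => f (X (i + m) ω))) :
    HasDecay ℙ G (fun f => √(max C 1) * a f) r n (fun i => X (i + 1)) := by
  refine ⟨fun i => hX _, fun f hf => ?_⟩
  have hvar : ∀ i, 1 ≤ i → i ≤ n → variance' ℙ (fun ω => f (X i ω)) ≤ a f ^ 2 := by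
    intro i hi hin
    refine (variance'_le_integral_sq ((hGm f hf).comp (hX i))).trans ?_
    have := hsq f hf i hi hin
    rwa [integral_map (hX i).aemeasurable ((hGm f hf).pow_const 2).aestronglyMeasurable] at this
  have hφ : (√(max C 1) * a f) ^ 2 = max C 1 * a f ^ 2 := by
    rw [mul_pow, Real.sq_sqrt (le_trans zero_le_one (le_max_right _ _))]
  have hsqrt : ∀ i, 1 ≤ i → i ≤ n → √(variance' ℙ (fun ω => f (X i ω))) ≤ a f := fun i hi hin =>
    (Real.sqrt_le_left (ha f hf)).2 (hvar i hi hin)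
  have hlt : ∀ i j, i < j → j < n →
      |covar ℙ (fun ω => f (X (i + 1) ω)) (fun ω => f (X (j + 1) ω))|
        ≤ (√(max C 1) * a f) ^ 2 * |(i : ℝ) - j| ^ (-r) := by
    intro i j hij hj
    have h1 := hcorr f hf (i + 1) (j - i) (by omega) (by omega) (by omega)
    rw [show i + 1 + (j - i) = j + 1 by omega] at h1
    have h2 : |(i : ℝ) - j| = ((j - i : ℕ) : ℝ) := by
      rw [abs_sub_comm, Nat.cast_sub hij.le,
        abs_of_pos (sub_pos.2 (by exact_mod_cast hij))]
    have h3 : (1 : ℝ) ≤ ((j - i : ℕ) : ℝ) := by exact_mod_cast (by omega : 1 ≤ j - i)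
    have haf := ha f hf
    rw [h2, hφ]
    calc _ ≤ _ := h1
      _ ≤ max C 1 * ((j - i : ℕ) : ℝ) ^ (-r) * a f * a f := by
          have e1 := hsqrt (i + 1) (by omega) (by omega)
          have e2 := hsqrt (j + 1) (by omega) (by omega)
          have e3 : ((j - i : ℕ) : ℝ) ^ (-ρ) ≤ ((j - i : ℕ) : ℝ) ^ (-r) :=
            Real.rpow_le_rpow_of_exponent_le h3 (by linarith)
          have e4 := le_max_left C 1
          have e5 : 0 < max C 1 := lt_max_of_lt_left hC
          gcongr
      _ = _ := by ring
  refine ⟨fun i hi => ?_, fun i hi j hj hij => ?_⟩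
  · rw [hφ]
    exact (hvar (i + 1) (by omega) (by omega)).trans
      (le_mul_of_one_le_left (sq_nonneg _) (le_max_right _ _))
  · rcases lt_or_gt_of_ne hij with h | h
    · exact hlt i j h hj
    · rw [covar_comm, abs_sub_comm]
      exact hlt j i h hi

theorem tsum_ofReal_subset_le {α : Type*} {F G : Set α} (hGF : G ⊆ F) {u : α → ℝ}
    (hu : ∀ f ∈ F, 0 ≤ u f) (hs : Summable fun f : F => u f) :
    ∑' f : G, ENNReal.ofReal (u f) ≤ ENNReal.ofReal (∑' f : F, u f) := by
  rw [ENNReal.ofReal_tsum_of_nonneg (fun f : F => hu f f.2) hs]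
  exact ENNReal.tsum_comp_le_tsum_of_injective (f := Set.inclusion hGF)
    (Set.inclusion_injective hGF) fun f : F => ENNReal.ofReal (u f)

theorem exists_sInf_argmax {n τ : ℕ} (hτ0 : 0 < τ) (hτn : τ < n) (g : ℕ → ℝ) :
    0 < sInf {k : ℕ | k ∈ Finset.Ico 1 n ∧ ∀ j ∈ Finset.Ico 1 n, g j ≤ g k} ∧
      sInf {k : ℕ | k ∈ Finset.Ico 1 n ∧ ∀ j ∈ Finset.Ico 1 n, g j ≤ g k} < n ∧
      g τ ≤ g (sInf {k : ℕ | k ∈ Finset.Ico 1 n ∧ ∀ j ∈ Finset.Ico 1 n, g j ≤ g k}) := by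
  have hτ : τ ∈ Finset.Ico 1 n := Finset.mem_Ico.2 ⟨hτ0, hτn⟩
  obtain ⟨k, hk, hmax⟩ := Finset.exists_max_image (Finset.Ico 1 n) g ⟨τ, hτ⟩
  have hmem := Nat.sInf_mem
    (s := {k : ℕ | k ∈ Finset.Ico 1 n ∧ ∀ j ∈ Finset.Ico 1 n, g j ≤ g k}) ⟨k, hk, hmax⟩
  have h1 := Finset.mem_Ico.1 hmem.1
  exact ⟨h1.1, h1.2, hmem.2 τ hτ⟩

/-- An eventual bound by a vanishing function of `M` plus a vanishing sequence gives `O_p`. -/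
theorem IsOp.of_eventually_le {Ω : Type*} [MeasurableSpace Ω] {μ : Measure Ω} {A : ℕ → Ω → ℝ}
    {c : ℕ → ℝ} {u : ℝ → ℝ} {v : ℕ → ℝ} (hu : Tendsto u atTop (nhds 0))
    (hv : Tendsto v atTop (nhds 0))
    (h : ∀ᶠ M in atTop, ∀ᶠ n in atTop,
      μ {ω | M * c n < |A n ω|} ≤ ENNReal.ofReal (u M + v n)) : IsOp μ A c := by
  have hu' : Tendsto (fun M => ENNReal.ofReal (u M)) atTop (nhds 0) := by
    simpa using ENNReal.tendsto_ofReal hu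
  refine tendsto_of_tendsto_of_tendsto_of_le_of_le' tendsto_const_nhds hu'
    (Eventually.of_forall fun _ => zero_le) ?_
  filter_upwards [h] with M hM
  have hlim : Tendsto (fun n => ENNReal.ofReal (u M + v n)) atTop
      (nhds (ENNReal.ofReal (u M))) := by
    simpa using ENNReal.tendsto_ofReal (hv.const_add (u M))
  rw [← hlim.limsup_eq]
  exact limsup_le_limsup hM

end Assembly

/-- **Theorem 1** (rate of convergence of the nonparametric change-point estimator,
countable family, difference of distributions possibly tending to zero). -/
theorem changePoint_rate_countable_family
    {Ω : Type*} [MeasurableSpace Ω] (ℙ : Measure Ω) [IsProbabilityMeasure ℙ]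
    {E : Type*} [MeasurableSpace E]
    -- the change point and the exponent of the weight
    (θ γ : ℝ) (hθ0 : 0 < θ) (hθ1 : θ < 1) (hγ0 : 0 ≤ γ) (hγ1 : γ < 1)
    -- the observations and their marginal laws
    (X : ℕ → ℕ → Ω → E) (hXmeas : ∀ n i, Measurable (X n i))
    (P Q : ℕ → Measure E) [∀ n, IsProbabilityMeasure (P n)] [∀ n, IsProbabilityMeasure (Q n)]
    (hlaw : ∀ n i, 1 ≤ i → i ≤ n →
      Measure.map (X n i) ℙ = if (i : ℝ) ≤ (n : ℝ) * θ then P n else Q n)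
    -- the seminorm on the space of finite signed measures
    (N : SignedMeasure E → ℝ)
    (hN_smul : ∀ (a : ℝ) (ν : SignedMeasure E), N (a • ν) = |a| * N ν)
    (hN_add : ∀ ν₁ ν₂ : SignedMeasure E, N (ν₁ + ν₂) ≤ N ν₁ + N ν₂)
    -- the weighted difference of empirical measures `D_k` (for `1 ≤ k < n`)
    (D : ℕ → ℕ → Ω → SignedMeasure E)
    (hD : ∀ n k ω, 1 ≤ k → k < n →
      D n k ω = (((k : ℝ) / n) * (1 - (k : ℝ) / n)) ^ ((1 : ℝ) - γ) •
        ((k : ℝ)⁻¹ • ∑ i ∈ Finset.Icc 1 k, (Measure.dirac (X n i ω)).toSignedMeasure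
          - ((n : ℝ) - k)⁻¹ •
              ∑ i ∈ Finset.Icc (k + 1) n, (Measure.dirac (X n i ω)).toSignedMeasure))
    -- the estimator: `1/n` times the smallest maximizer of `N(D_k)` over `1 ≤ k < n`
    (θhat : ℕ → Ω → ℝ)
    (hθhat : ∀ n ω, θhat n ω = (n : ℝ)⁻¹ *
      ((sInf {k : ℕ | k ∈ Finset.Ico 1 n ∧
        ∀ j ∈ Finset.Ico 1 n, N (D n j ω) ≤ N (D n k ω)} : ℕ) : ℝ))
    -- the countable family `F`, the weights `d(f)` and the norms `‖f‖`
    (F : Set (E → ℝ)) (hFcount : F.Countable) (hFmeas : ∀ f ∈ F, Measurable f)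
    (normF : (E → ℝ) → ℝ)
    (hnormF : ∀ f : E → ℝ, normF f =
      ⨆ n : ℕ, Real.sqrt ((∫ x, f x ^ 2 ∂(P n)) + ∫ x, f x ^ 2 ∂(Q n)))
    (d : (E → ℝ) → ℝ) (hd : ∀ f ∈ F, 0 < d f)
    (hdsum : Summable fun f : F => d f * normF f)
    -- condition (2.9): the seminorm is dominated by the weighted moments
    (hNle : ∀ ν : SignedMeasure E, N ν ≤ ∑' f : F, d f * |sIntegral ν f|)
    -- Assumption 1: algebraic decay of correlations, uniformly over `F`
    (C ρ : ℝ) (hC : 0 < C) (hρ : 0 < ρ)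
    (hA1 : ∀ f ∈ F, ∀ n i m : ℕ, 1 ≤ i → 1 ≤ m → i + m ≤ n →
      |covar ℙ (fun ω => f (X n i ω)) (fun ω => f (X n (i + m) ω))| ≤
        C * (m : ℝ) ^ (-ρ) *
          Real.sqrt (variance' ℙ fun ω => f (X n i ω)) *
          Real.sqrt (variance' ℙ fun ω => f (X n (i + m) ω)))
    -- `ρ̄ = min (1 - ε) ρ` for an arbitrarily small fixed `ε > 0`
    (ε : ℝ) (hε : 0 < ε)
    -- condition (2.10) on the sequence `b_n`
    (b : ℕ → ℝ) (hb : ∀ n, 0 < b n)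
    (h210 : Tendsto (fun n =>
      ℙ {ω | N ((P n).toSignedMeasure - (Q n).toSignedMeasure) ≤ b n}) atTop (nhds 0))
    -- condition (2.11)
    (h211 : Tendsto (fun n : ℕ => (b n)⁻¹ *
      ((n : ℝ) ^ (-(min (1 - ε) ρ) / 2) *
          (1 + Real.log n * (if γ - 1 + min (1 - ε) ρ / 2 = 0 then (1 : ℝ) else 0)) +
        (n : ℝ) ^ (γ - 1))) atTop (nhds 0)) :
    -- conclusion (2.12): `θ̂_n − θ = O_p(n⁻¹ b_n^{−2/ρ̄})`
    IsOp ℙ (fun n ω => θhat n ω - θ)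
      (fun n => (n : ℝ)⁻¹ * b n ^ (-(2 / min (1 - ε) ρ))) := by
  set r := min (1 - ε) ρ with hr
  have hr1 : r < 1 := (min_le_left _ _).trans_lt (by linarith)
  set G : Set (E → ℝ) := {f ∈ F | IsBddFun f} with hGdef
  have hGF : G ⊆ F := fun f hf => hf.1
  have hnorm0 : ∀ f, 0 ≤ normF f := fun f => by
    rw [hnormF]
    exact Real.iSup_nonneg fun _ => Real.sqrt_nonneg _
  have hdn : ∀ f ∈ F, 0 ≤ d f * normF f := fun f hf => mul_nonneg (hd f hf).le (hnorm0 f)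
  have hNG := seminorm_le_tsum_isBddFun N hN_smul hN_add hFcount hFmeas hd hNle
  set T := ∑' f : F, d f * normF f with hT
  have hT0 : 0 ≤ T := tsum_nonneg fun f => hdn f f.2
  have hsum : ∀ a : ℝ, 0 ≤ a →
      ∑' f : G, ENNReal.ofReal (d f * (a * normF f)) ≤ ENNReal.ofReal (a * T) := by
    intro a ha
    have h1 := tsum_ofReal_subset_le hGF (u := fun f => d f * (a * normF f))
      (fun f hf => mul_nonneg (hd f hf).le (mul_nonneg ha (hnorm0 f)))
      ((hdsum.mul_left a).congr fun f => by ring)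
    refine h1.trans_eq ?_
    rw [hT, ← tsum_mul_left]
    congr 2
    funext f
    ring
  have hsmall : ∀ n, N ((P n).toSignedMeasure - (Q n).toSignedMeasure) ≤ 2 * T := by
    intro n
    have h1 : ENNReal.ofReal (N ((P n).toSignedMeasure - (Q n).toSignedMeasure))
        ≤ ENNReal.ofReal (2 * T) := by
      refine (hNG _).trans (le_trans (ENNReal.tsum_le_tsum fun f => ?_) (hsum 2 zero_le_two))
      refine ENNReal.ofReal_le_ofReal (mul_le_mul_of_nonneg_left ?_ (hd f f.2.1).le)
      have hm := hFmeas f f.2.1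
      rw [sIntegral_toSignedMeasure_sub f.2.2 hm]
      have e1 := abs_integral_le_of_sq f.2.2 hm (P n) (hnorm0 f)
        (integral_sq_left_le f.2.2 (hnormF f) n)
      have e2 := abs_integral_le_of_sq f.2.2 hm (Q n) (hnorm0 f)
        (integral_sq_right_le f.2.2 (hnormF f) n)
      exact (abs_sub _ _).trans (by linarith)
    exact (ENNReal.ofReal_le_ofReal_iff (by positivity)).1 h1
  have hbN : ∀ᶠ n in atTop, b n < N ((P n).toSignedMeasure - (Q n).toSignedMeasure) := by
    filter_upwards [h210.eventually (gt_mem_nhds zero_lt_one)] with n hn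
    by_contra! h
    simp [h] at hn
  have hrate : Tendsto (fun n => (b n)⁻¹ * devRate γ r n) atTop (nhds 0) := h211
  rcases le_or_gt r 0 with hr0 | hr0
  · exfalso
    obtain ⟨n, ⟨hn, hn1⟩, hn2⟩ := ((hbN.and (eventually_ge_atTop 1)).and
      (hrate.eventually (gt_mem_nhds (show (0 : ℝ) < (2 * T + 1)⁻¹ by positivity)))).exists
    have h1 : (1 : ℝ) ≤ devRate γ r n :=
      (Real.one_le_rpow (by exact_mod_cast hn1) (by linarith)).trans (rpow_le_devRate γ r hn1)
    have h2 : (2 * T + 1)⁻¹ ≤ (b n)⁻¹ := by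
      have := hb n
      have := hsmall n
      gcongr
      linarith
    have h3 := le_mul_of_one_le_right (inv_nonneg.2 (hb n).le) h1
    linarith
  have hK : 0 ≤ √(max C 1) * T * maxConst r :=
    mul_nonneg (by positivity) (maxConst_pos hr1).le
  have hmax : ∀ (J : ℕ) (Y : ℕ → Ω → E), HasDecay ℙ G (fun f => √(max C 1) * normF f) r J Y →
      HasMax ℙ (fun ω j => N (empDev ℙ Y ω j)) J (√(max C 1) * T * maxConst r) (1 - r / 2) :=
    fun J Y h => hasMax_empDev hr0 hr1 (hFcount.mono hGF) (fun f hf => hf.2)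
      (fun f hf => hFmeas f hf.1) (fun f hf => mul_nonneg (Real.sqrt_nonneg _) (hnorm0 f))
      (fun f hf => hd f hf.1) (by positivity) (hsum _ (Real.sqrt_nonneg _)) hNG h
  set c := min θ (1 - θ) / 2 with hc
  have hc0 : 0 < c := half_pos (lt_min hθ0 (by linarith))
  obtain ⟨A, hA, hfar⟩ := exists_measure_far_le hr0 hγ0 hγ1 hK hN_smul hN_add hmax hc0
  have hdecay : ∀ n, HasDecay ℙ G (fun f => √(max C 1) * normF f) r n (fun i => X n (i + 1)) := by
    intro n
    refine hasDecay_of_corr (hXmeas n) (fun f hf => hFmeas f hf.1) (fun f _ => hnorm0 f)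
      (fun f hf i hi hin => ?_) hC (min_le_right _ _) fun f hf i m => hA1 f hf.1 n i m
    rw [hlaw n i hi hin]
    split_ifs
    · exact integral_sq_left_le hf.2 (hnormF f) n
    · exact integral_sq_right_le hf.2 (hnormF f) n
  have hDeq : ∀ n k ω, 0 < k → k < n → D n k ω = splitDiff γ n k
      (empSum (fun i => X n (i + 1)) ω k) (empSum (fun i => X n (i + 1)) ω n) := by
    intro n k ω hk hkn
    have e1 := sum_Icc_succ_eq_sub (fun i => (Measure.dirac (X n i ω)).toSignedMeasure)
      (Nat.zero_le k)
    have e2 := sum_Icc_succ_eq_sub (fun i => (Measure.dirac (X n i ω)).toSignedMeasure) hkn.le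
    simp only [Finset.range_zero, Finset.sum_empty, sub_zero, zero_add] at e1
    rw [hD n k ω hk hkn, e1, e2]
    rfl
  refine IsOp.of_eventually_le (u := fun M => A * (M / 2) ^ (-(r / 2)))
    (v := fun n => A * ((b n)⁻¹ * devRate γ r n)) ?_ ?_ ?_
  · simpa using ((tendsto_rpow_neg_atTop (half_pos hr0)).comp
      (tendsto_id.atTop_div_const zero_lt_two)).const_mul A
  · simpa using hrate.const_mul A
  filter_upwards [eventually_ge_atTop (2 * (2 * T) ^ (2 / r)), eventually_gt_atTop 0] with M hM hM0
  filter_upwards [hbN, eventually_gt_atTop 0,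
    tendsto_natCast_atTop_atTop.eventually_ge_atTop c⁻¹] with n hbn hn hnc
  have hn' : (0 : ℝ) < n := by exact_mod_cast hn
  set τ := ⌊(n : ℝ) * θ⌋₊ with hτ
  have hτ1 : (τ : ℝ) ≤ n * θ := Nat.floor_le (by positivity)
  have hτ2 : (n : ℝ) * θ < τ + 1 := Nat.lt_floor_add_one _
  have hnc' : 1 ≤ c * n := by
    have := mul_le_mul_of_nonneg_left hnc hc0.le
    rwa [mul_inv_cancel₀ hc0.ne'] at this
  have hcθ : 2 * c ≤ θ := by rw [hc, mul_div_cancel₀ _ two_ne_zero]; exact min_le_left _ _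
  have hcθ' : 2 * c ≤ 1 - θ := by rw [hc, mul_div_cancel₀ _ two_ne_zero]; exact min_le_right _ _
  have hcl : c ≤ (τ : ℝ) / n := by
    rw [le_div_iff₀ hn']
    nlinarith
  have hcu : (τ : ℝ) / n ≤ 1 - c := by
    rw [div_le_iff₀ hn']
    nlinarith
  have hτ0 : 0 < τ := by
    have : 0 < (τ : ℝ) := by
      rw [le_div_iff₀ hn'] at hcl
      linarith
    exact_mod_cast this
  have hτn : τ < n := by
    have : (τ : ℝ) < n := by
      rw [← div_lt_one hn']
      linarith
    exact_mod_cast this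
  have hb0 := hb n
  have hbT : b n ≤ 2 * T := hbn.le.trans (hsmall n)
  set m := M / 2 * b n ^ (-(2 / r)) with hm
  have hbp : 0 < b n ^ (-(2 / r)) := Real.rpow_pos_of_pos hb0 _
  have hm0 : 0 < m := by positivity
  have hm1 : 1 ≤ m := by
    have h1 : b n ^ (2 / r) ≤ (2 * T) ^ (2 / r) :=
      Real.rpow_le_rpow hb0.le hbT (by positivity)
    have h2 : b n ^ (2 / r) ≤ M / 2 := by linarith
    have h3 := mul_le_mul_of_nonneg_right h2 hbp.le
    rwa [← Real.rpow_add hb0, add_neg_cancel, Real.rpow_zero] at h3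
  have hmr : (b n)⁻¹ * m ^ (-r / 2) = (M / 2) ^ (-(r / 2)) := by
    rw [hm, Real.mul_rpow (by positivity) hbp.le, ← Real.rpow_mul hb0.le,
      show -(2 / r) * (-r / 2) = 1 by field_simp, Real.rpow_one, neg_div]
    field_simp
  have hmain := hfar n τ (fun i => X n (i + 1)) (P n) (Q n) (b n) m hn (hdecay n)
    (fun i hi => by
      rw [hlaw n (i + 1) (by omega) (by omega), if_pos]
      exact (Nat.le_floor_iff (by positivity)).1 hi)
    (fun i hi hi' => by
      rw [hlaw n (i + 1) (by omega) (by omega), if_neg]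
      intro h
      have := (Nat.le_floor_iff (by positivity)).2 h
      omega) hcl hcu hb0 hm0 hbn.le
  rw [hmr, mul_add] at hmain
  refine (measure_mono fun ω hω => ?_).trans hmain
  obtain ⟨hk0, hkn, hkmax⟩ := exists_sInf_argmax hτ0 hτn fun k => N (D n k ω)
  rw [Set.mem_ofPred_eq, hθhat] at hω
  set k := sInf {k : ℕ | k ∈ Finset.Ico 1 n ∧ ∀ j ∈ Finset.Ico 1 n, N (D n j ω) ≤ N (D n k ω)}
  refine ⟨k, hk0, hkn, ?_, ?_⟩
  · have e1 : (n : ℝ)⁻¹ * k - θ = (n : ℝ)⁻¹ * (k - n * θ) := by field_simp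
    rw [e1, abs_mul, abs_of_pos (inv_pos.2 hn'), mul_left_comm,
      mul_lt_mul_iff_right₀ (inv_pos.2 hn')] at hω
    have e2 : M * b n ^ (-(2 / r)) = 2 * m := by rw [hm]; ring
    have e3 : |(k : ℝ) - n * θ| ≤ |(τ : ℝ) - k| + |(τ : ℝ) - n * θ| := by
      rw [abs_sub_comm (τ : ℝ) k]
      exact abs_sub_le _ _ _
    have e4 : |(τ : ℝ) - n * θ| ≤ 1 := by
      rw [abs_le]
      constructor <;> linarith
    linarith
  · rw [← hDeq n τ ω hτ0 hτn, ← hDeq n k ω hk0 hkn]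
    exact hkmax
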